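/- arXiv:1507.03099 — 2 statements merged into one kernel-verified Lean document; each statement's English description precedes it below -/
import Mathlib

section
/- Let p be a prime with p ≡ 1 (mod 3), and let k, n be nonnegative integers. Then (p−1)·A_3(p^k·n + (2p^k − 2)/3) + (p^k − p)·A_3(n) = (p^k − 1)·A_3(p·n + (2p − 2)/3). (Here (2p^k − 2)/3 and (2p − 2)/3 are integers since p ≡ 1 (mod 3).) -/
/-- The hook length of the cell `(i, j)` in a Young diagram `μ`:
arm length + leg length + 1. -/
def YoungDiagram.hookLength (μ : YoungDiagram) (i j : ℕ) : ℕ :=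
  μ.rowLen i + μ.colLen j - i - j - 1

/-- A Young diagram (equivalently, a partition) is a 3-core if none of its
hook numbers is divisible by 3. -/
def YoungDiagram.IsThreeCore (μ : YoungDiagram) : Prop :=
  ∀ c ∈ μ.cells, ¬ (3 ∣ μ.hookLength c.1 c.2)

/-- `a3 n` is the number of 3-core partitions of `n`. -/
noncomputable def a3 (n : ℕ) : ℕ :=
  Nat.card {μ : YoungDiagram // μ.card = n ∧ μ.IsThreeCore}

/-- `A3 n` is the number of partition pairs of `n` in which each partition is a 3-core. -/
noncomputable def A3 (n : ℕ) : ℕ :=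
  Nat.card {p : YoungDiagram × YoungDiagram //
    p.1.card + p.2.card = n ∧ p.1.IsThreeCore ∧ p.2.IsThreeCore}

/-- `B3 n` is the number of partition triples of `n` in which each partition is a 3-core. -/
noncomputable def B3 (n : ℕ) : ℕ :=
  Nat.card {p : YoungDiagram × YoungDiagram × YoungDiagram //
    p.1.card + p.2.1.card + p.2.2.card = n ∧
    p.1.IsThreeCore ∧ p.2.1.IsThreeCore ∧ p.2.2.IsThreeCore}

/-!
Encode a partition by its bead set, the hook lengths of its first column. It is a 3-core exactly
when this set is stable under subtracting 3, and as 0 is never a bead, the set is then given by the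
numbers `u`, `v` of beads in the residue classes 1 and 2. The size of the partition is a quadratic
polynomial in `u` and `v`, which identifies the 3-cores of size `n` with the Eisenstein integers of
norm `3 n + 1` up to units. Their number is `∑ d ∣ 3 n + 1, χ d`, where `χ` is the quadratic
character modulo 3: by the splitting of primes in the Eisenstein integers, both sides satisfy the
same Hecke relations.

Pairs of 3-cores are thus counted by the convolution of this divisor sum with itself at
`N = 3 n + 2`, that is, by the sum of `χ a * χ b` over `a x + b y = N`. Liouville's rearrangement
`a x + b y = (a - b) x + b (x + y)` evaluates it, giving `3 A₃(n) = σ(3 n + 2)`. The recurrence is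
the one satisfied by `σ` along the powers of a prime, because
`3 (q n + (2 q - 2) / 3) + 2 = q (3 n + 2)`.
-/

namespace ThreeCore

open Finset YoungDiagram

section Beads

variable (μ : YoungDiagram)

theorem lt_rowLen_iff_lt_colLen {i j : ℕ} : j < μ.rowLen i ↔ i < μ.colLen j := by
  rw [← mem_iff_lt_rowLen, mem_iff_lt_colLen]

theorem card_eq_sum_rowLen : μ.card = ∑ i ∈ range (μ.colLen 0), μ.rowLen i := by
  have fiber (i : ℕ) : μ.rowLen i = #{c ∈ μ.cells | c.1 = i} := rowLen_eq_card μ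
  simp_rw [fiber]
  refine card_eq_sum_card_fiberwise fun c hc => ?_
  rw [SetLike.mem_coe, mem_cells, ← Prod.mk.eta (p := c), mem_iff_lt_rowLen] at hc
  exact mem_coe.2 (mem_range.2 ((lt_rowLen_iff_lt_colLen μ).1 (Nat.zero_lt_of_lt hc)))

/-- The bead set (`β`-set) of a Young diagram: the hook lengths of its first column. Row `i` of a
diagram with `L` rows contributes `μ.rowLen i + (L - 1 - i)`; the rows are listed from the bottom,
so that the beads are listed in increasing order. -/
def beads : Finset ℕ :=
  (range (μ.colLen 0)).image fun k => μ.rowLen (μ.colLen 0 - 1 - k) + k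

theorem mem_beads {b : ℕ} :
    b ∈ beads μ ↔ ∃ i < μ.colLen 0, b + i + 1 = μ.rowLen i + μ.colLen 0 := by
  simp only [beads, mem_image, mem_range]
  constructor
  · rintro ⟨k, hk, rfl⟩
    exact ⟨μ.colLen 0 - 1 - k, by omega, by omega⟩
  · rintro ⟨i, hi, h⟩
    refine ⟨μ.colLen 0 - 1 - i, by omega, ?_⟩
    rw [show μ.colLen 0 - 1 - (μ.colLen 0 - 1 - i) = i by omega]
    omega

theorem strictMono_bead : StrictMono fun k => μ.rowLen (μ.colLen 0 - 1 - k) + k := fun _ _ hab =>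
  add_lt_add_of_le_of_lt (μ.rowLen_anti _ _ (Nat.sub_le_sub_left hab.le _)) hab

theorem card_beads : #(beads μ) = μ.colLen 0 := by
  rw [beads, card_image_of_injective _ (strictMono_bead μ).injective, card_range]

theorem sum_beads : ∑ b ∈ beads μ, b = μ.card + ∑ k ∈ range (μ.colLen 0), k := by
  rw [beads, sum_image (strictMono_bead μ).injective.injOn, sum_add_distrib, card_eq_sum_rowLen,
    sum_range_reflect]

theorem zero_notMem_beads : 0 ∉ beads μ := by
  rw [mem_beads]
  rintro ⟨i, hi, h⟩
  have := (lt_rowLen_iff_lt_colLen μ).2 hi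
  omega

/-- The `j`-th natural number missing from the bead set (see `notMem_beads_iff`), attached to
column `j`. The subtraction is never truncated, as `μ.colLen j ≤ μ.colLen 0`. -/
def gap (j : ℕ) : ℕ :=
  μ.colLen 0 + j - μ.colLen j

theorem gap_add_colLen (j : ℕ) : gap μ j + μ.colLen j = μ.colLen 0 + j := by
  have := μ.colLen_anti 0 j j.zero_le
  rw [gap]
  omega

theorem strictMono_gap : StrictMono (gap μ) := fun a b hab => by
  have := μ.colLen_anti a b hab.le
  have := gap_add_colLen μ a
  have := gap_add_colLen μ b
  omega

theorem gap_notMem_beads (j : ℕ) : gap μ j ∉ beads μ := by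
  rw [mem_beads]
  rintro ⟨i, -, h⟩
  have := gap_add_colLen μ j
  have := lt_rowLen_iff_lt_colLen μ (i := i) (j := j)
  omega

-- The `i` found here is the number of beads exceeding `c`, the length of the column of `c`.
theorem exists_gap_eq {c : ℕ} (hc : c ∉ beads μ) : ∃ j, gap μ j = c := by
  have rowLen_eq_zero {i : ℕ} (hi : μ.colLen 0 ≤ i) : μ.rowLen i = 0 :=
    Nat.eq_zero_of_not_pos fun h => hi.not_gt ((lt_rowLen_iff_lt_colLen μ).1 h)
  have exists_lt : ∃ i, μ.rowLen i + μ.colLen 0 < c + i + 1 :=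
    ⟨μ.colLen 0, by rw [rowLen_eq_zero le_rfl]; omega⟩
  classical
  obtain ⟨i, hi, hmin⟩ : ∃ i, μ.rowLen i + μ.colLen 0 < c + i + 1 ∧
      ∀ k < i, ¬ μ.rowLen k + μ.colLen 0 < c + k + 1 :=
    ⟨Nat.find exists_lt, Nat.find_spec exists_lt, fun _ => Nat.find_min exists_lt⟩
  have colLen_eq : μ.colLen (c + i - μ.colLen 0) = i := by
    refine eq_of_forall_lt_iff fun k => ?_
    rw [← lt_rowLen_iff_lt_colLen]
    refine ⟨fun hk => ?_, fun hk => ?_⟩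
    · by_contra! hik
      have := μ.rowLen_anti i k hik
      omega
    · have hle := hmin (i - 1) (by omega)
      have hanti := μ.rowLen_anti k (i - 1) (by omega)
      have hne : i - 1 < μ.colLen 0 → c + (i - 1) + 1 ≠ μ.rowLen (i - 1) + μ.colLen 0 :=
        fun hlt h => hc ((mem_beads μ).2 ⟨i - 1, hlt, h⟩)
      have hzero := rowLen_eq_zero (i := i - 1)
      omega
  have := gap_add_colLen μ (c + i - μ.colLen 0)
  exact ⟨c + i - μ.colLen 0, by omega⟩

theorem notMem_beads_iff {c : ℕ} : c ∉ beads μ ↔ c ∈ Set.range (gap μ) :=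
  ⟨exists_gap_eq μ, by rintro ⟨j, rfl⟩; exact gap_notMem_beads μ j⟩

theorem gap_add_hookLength_mem_beads {i j : ℕ} (h : (i, j) ∈ μ) :
    gap μ j + μ.hookLength i j ∈ beads μ := by
  have hrow := mem_iff_lt_rowLen.1 h
  have hcol := mem_iff_lt_colLen.1 h
  have hle := μ.colLen_anti 0 j j.zero_le
  have hgap := gap_add_colLen μ j
  refine (mem_beads μ).2 ⟨i, by omega, ?_⟩
  rw [hookLength]
  omega

theorem exists_hookLength_eq {j t : ℕ} (ht : 0 < t) (h : gap μ j + t ∈ beads μ) :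
    ∃ i, (i, j) ∈ μ ∧ μ.hookLength i j = t := by
  obtain ⟨i, -, hit⟩ := (mem_beads μ).1 h
  have hgap := gap_add_colLen μ j
  have hiff := lt_rowLen_iff_lt_colLen μ (i := i) (j := j)
  refine ⟨i, mem_iff_lt_rowLen.2 (by omega), ?_⟩
  rw [hookLength]
  omega

theorem forall_not_dvd_hookLength_iff {t : ℕ} :
    (∀ c ∈ μ.cells, ¬ t ∣ μ.hookLength c.1 c.2) ↔ ∀ b, b + t ∈ beads μ → b ∈ beads μ := by
  constructor
  · intro hcore b hb
    by_contra hgap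
    obtain ⟨j, rfl⟩ := exists_gap_eq μ hgap
    obtain rfl | ht := t.eq_zero_or_pos
    · exact hgap hb
    obtain ⟨i, hi, hook⟩ := exists_hookLength_eq μ ht hb
    exact hcore (i, j) ((mem_cells _).2 hi) hook.symm.dvd
  · rintro hclosed ⟨i, j⟩ hc ⟨k, hk⟩
    have mem_of_add_mul (k b : ℕ) : b + t * k ∈ beads μ → b ∈ beads μ := by
      induction k with
      | zero => simp
      | succ k ih => exact fun hb => ih (hclosed _ (by rwa [add_assoc, ← Nat.mul_succ]))
    refine gap_notMem_beads μ j (mem_of_add_mul k _ ?_)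
    rw [← hk]
    exact gap_add_hookLength_mem_beads μ ((mem_cells _).1 hc)

end Beads

theorem beads_injective : Function.Injective beads := by
  intro μ ν h
  have hcol0 : μ.colLen 0 = ν.colLen 0 := by rw [← card_beads, h, card_beads]
  have hgap : gap μ = gap ν := by
    refine ((strictMono_gap μ).range_inj (strictMono_gap ν)).1 (Set.ext fun c => ?_)
    rw [← notMem_beads_iff, ← notMem_beads_iff, h]
  ext ⟨i, j⟩
  have hμ := gap_add_colLen μ j
  have hν := gap_add_colLen ν j
  rw [hgap, hcol0, ← hν] at hμ
  rw [mem_cells, mem_cells, mem_iff_lt_colLen, mem_iff_lt_colLen, Nat.add_left_cancel hμ]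

section OfBeads

variable (B : Finset ℕ)

theorem infinite_setOf_notMem : {c | c ∉ B}.Infinite :=
  B.finite_toSet.infinite_compl

theorem strictMono_nth_notMem : StrictMono (Nat.nth (· ∉ B)) :=
  Nat.nth_strictMono (infinite_setOf_notMem B)

theorem nth_notMem (j : ℕ) : Nat.nth (· ∉ B) j ∉ B :=
  Nat.nth_mem_of_infinite (infinite_setOf_notMem B) j

theorem range_nth_notMem : Set.range (Nat.nth (· ∉ B)) = {c | c ∉ B} :=
  Nat.range_nth_of_infinite (infinite_setOf_notMem B)

/-- The Young diagram with a prescribed bead set `B` (see `beads_ofBeads`): its `j`-th column has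
as many cells as there are elements of `B` beyond the `j`-th natural number missing from `B`. -/
noncomputable def ofBeads : YoungDiagram where
  cells := {c ∈ range #B ×ˢ range (B.sup id) | c.1 < #{b ∈ B | Nat.nth (· ∉ B) c.2 < b}}
  isLowerSet := by
    rintro ⟨i, j⟩ ⟨i', j'⟩ ⟨hi, hj⟩ hij
    simp only [coe_filter, mem_product, mem_range, Set.mem_ofPred_eq] at hij hi hj ⊢
    refine ⟨by omega, hi.trans_lt (hij.2.trans_le (card_le_card ?_))⟩
    exact monotone_filter_right B
      fun b _ hb => ((strictMono_nth_notMem B).monotone hj).trans_lt hb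

theorem mem_ofBeads {i j : ℕ} :
    (i, j) ∈ ofBeads B ↔ i < #{b ∈ B | Nat.nth (· ∉ B) j < b} := by
  rw [← mem_cells, ofBeads, mem_filter, mem_product, mem_range, mem_range, and_iff_right_iff_imp]
  intro hi
  refine ⟨hi.trans_le (card_filter_le _ _), ?_⟩
  obtain ⟨b, hb⟩ := card_pos.1 (Nat.zero_lt_of_lt hi)
  rw [mem_filter] at hb
  exact ((strictMono_nth_notMem B).le_apply.trans_lt hb.2).trans_le (le_sup (f := id) hb.1)

theorem colLen_ofBeads (j : ℕ) : (ofBeads B).colLen j = #{b ∈ B | Nat.nth (· ∉ B) j < b} :=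
  eq_of_forall_lt_iff fun i => by rw [← mem_iff_lt_colLen, mem_ofBeads]

theorem card_filter_lt_nth_add (j : ℕ) :
    #{b ∈ B | b < Nat.nth (· ∉ B) j} + j = Nat.nth (· ∉ B) j := by
  set g := Nat.nth (· ∉ B) j with hg
  have hcount : #{c ∈ range g | c ∉ B} = j := by
    rw [← Nat.count_eq_card_filter_range, hg, Nat.count_nth_of_infinite (infinite_setOf_notMem B)]
  have hfilter : {b ∈ B | b < g} = {c ∈ range g | c ∈ B} := by
    ext b
    simp only [mem_filter, mem_range, and_comm]
  rw [hfilter, ← hcount, card_filter_add_card_filter_not, card_range]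

variable {B}

theorem colLen_zero_ofBeads (h0 : 0 ∉ B) : (ofBeads B).colLen 0 = #B := by
  have hnth : Nat.nth (· ∉ B) 0 = 0 := by
    rw [Nat.nth_zero]
    exact Nat.sInf_eq_zero.2 (Or.inl h0)
  rw [colLen_ofBeads, hnth]
  exact congrArg card (filter_true_of_mem fun b hb => Nat.pos_of_ne_zero fun h => h0 (h ▸ hb))

theorem gap_ofBeads (h0 : 0 ∉ B) : gap (ofBeads B) = Nat.nth (· ∉ B) := by
  funext j
  have hgap := gap_add_colLen (ofBeads B) j
  rw [colLen_zero_ofBeads h0, colLen_ofBeads] at hgap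
  have hlt := card_filter_lt_nth_add B j
  have hnot : #{b ∈ B | ¬ b < Nat.nth (· ∉ B) j} = #{b ∈ B | Nat.nth (· ∉ B) j < b} := by
    refine congrArg card (filter_congr fun b hb => ?_)
    have : b ≠ Nat.nth (· ∉ B) j := fun h => nth_notMem B j (h ▸ hb)
    omega
  have hsplit := card_filter_add_card_filter_not (s := B) (· < Nat.nth (· ∉ B) j)
  omega

theorem beads_ofBeads (h0 : 0 ∉ B) : beads (ofBeads B) = B := by
  ext c
  rw [← not_iff_not, notMem_beads_iff, gap_ofBeads h0, range_nth_notMem, Set.mem_ofPred_eq]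

end OfBeads

section CoreBeads

/-- The bead set `{1, 4, …, 3 * u - 2} ∪ {2, 5, …, 3 * v - 1}`; these are exactly the bead sets of
3-cores. -/
def coreBeads (u v : ℕ) : Finset ℕ :=
  (range u).image (3 * · + 1) ∪ (range v).image (3 * · + 2)

theorem mem_coreBeads {u v b : ℕ} :
    b ∈ coreBeads u v ↔ b % 3 = 1 ∧ b / 3 < u ∨ b % 3 = 2 ∧ b / 3 < v := by
  simp only [coreBeads, mem_union, mem_image, mem_range]
  refine or_congr ⟨?_, fun h => ⟨b / 3, h.2, by omega⟩⟩ ⟨?_, fun h => ⟨b / 3, h.2, by omega⟩⟩ <;>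
  · rintro ⟨k, hk, rfl⟩
    omega

theorem zero_notMem_coreBeads (u v : ℕ) : 0 ∉ coreBeads u v := by
  simp [mem_coreBeads]

theorem coreBeads_inj {u v u' v' : ℕ} (h : coreBeads u v = coreBeads u' v') : u = u' ∧ v = v' := by
  have hmem (b : ℕ) := h ▸ mem_coreBeads (u := u) (v := v) (b := b)
  simp only [mem_coreBeads] at hmem
  have := hmem (3 * u + 1)
  have := hmem (3 * u' + 1)
  have := hmem (3 * v + 2)
  have := hmem (3 * v' + 2)
  omega

theorem sum_coreBeads {M : Type*} [AddCommMonoid M] (u v : ℕ) (f : ℕ → M) :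
    ∑ b ∈ coreBeads u v, f b = ∑ k ∈ range u, f (3 * k + 1) + ∑ k ∈ range v, f (3 * k + 2) := by
  have hdisj : Disjoint ((range u).image (3 * · + 1)) ((range v).image (3 * · + 2)) := by
    simp only [disjoint_left, mem_image, not_exists, not_and]
    rintro _ ⟨k, _, rfl⟩ l _
    omega
  rw [coreBeads, sum_union hdisj, sum_image fun _ _ _ _ h => by omega,
    sum_image fun _ _ _ _ h => by omega]

theorem card_coreBeads (u v : ℕ) : #(coreBeads u v) = u + v := by
  rw [card_eq_sum_ones, sum_coreBeads, ← card_eq_sum_ones, ← card_eq_sum_ones, card_range,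
    card_range]

theorem two_mul_sum_range_add (m r u : ℕ) :
    2 * ∑ k ∈ range u, ((m * k + r : ℕ) : ℤ) = m * u * (u - 1) + 2 * r * u := by
  induction u with
  | zero => simp
  | succ u ih =>
    rw [sum_range_succ, mul_add, ih]
    push_cast
    ring

theorem exists_forall_iff_lt {P : ℕ → Prop} (hP : ∀ k, P (k + 1) → P k) (hex : ∃ k, ¬ P k) :
    ∃ u, ∀ k, P k ↔ k < u := by
  classical
  refine ⟨Nat.find hex, fun k => ⟨fun hk => ?_, fun hk => not_not.1 (Nat.find_min hex hk)⟩⟩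
  by_contra! hle
  exact Nat.find_spec hex (antitone_nat_of_succ_le (f := P) hP hle hk)

theorem exists_eq_coreBeads {B : Finset ℕ} (h0 : 0 ∉ B) (hB : ∀ b, b + 3 ∈ B → b ∈ B) :
    ∃ u v, B = coreBeads u v := by
  have runner (r : ℕ) : ∃ u, ∀ k, 3 * k + r ∈ B ↔ k < u := by
    refine exists_forall_iff_lt (fun k hk => hB _ (by rwa [mul_add, add_right_comm] at hk)) ?_
    obtain ⟨M, hM⟩ := B.bddAbove
    exact ⟨M + 1, fun h => by have := hM h; omega⟩
  obtain ⟨w, hw⟩ := runner 0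
  obtain ⟨u, hu⟩ := runner 1
  obtain ⟨v, hv⟩ := runner 2
  have w_eq_zero : w = 0 := Nat.eq_zero_of_not_pos fun h => h0 ((hw 0).2 h)
  refine ⟨u, v, Finset.ext fun b => ?_⟩
  rw [mem_coreBeads]
  obtain hb | hb | hb : b % 3 = 0 ∨ b % 3 = 1 ∨ b % 3 = 2 := by omega
  · rw [show b = 3 * (b / 3) + 0 by omega, hw]
    omega
  · rw [show b = 3 * (b / 3) + 1 by omega, hu]
    omega
  · rw [show b = 3 * (b / 3) + 2 by omega, hv]
    omega

theorem isThreeCore_iff {μ : YoungDiagram} :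
    μ.IsThreeCore ↔ ∃ u v, beads μ = coreBeads u v := by
  rw [IsThreeCore, forall_not_dvd_hookLength_iff]
  refine ⟨exists_eq_coreBeads (zero_notMem_beads μ), ?_⟩
  rintro ⟨u, v, h⟩ b
  rw [h, mem_coreBeads, mem_coreBeads]
  omega

theorem card_of_beads_eq_coreBeads {μ : YoungDiagram} {u v : ℕ} (h : beads μ = coreBeads u v) :
    (μ.card : ℤ) = u ^ 2 - u * v + v ^ 2 + v := by
  have hsum : ((∑ b ∈ coreBeads u v, b : ℕ) : ℤ) = μ.card + ∑ k ∈ range (u + v), (k : ℤ) := by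
    rw [← h, sum_beads, ← card_beads, h, card_coreBeads]
    push_cast
    rfl
  rw [sum_coreBeads] at hsum
  have hone := two_mul_sum_range_add 3 1 u
  have htwo := two_mul_sum_range_add 3 2 v
  have hall := two_mul_sum_range_add 1 0 (u + v)
  push_cast at hsum hone htwo hall
  simp only [one_mul, add_zero] at hall
  linarith

/-- The diagram of the 3-core with bead set `coreBeads u v`. -/
noncomputable def core (q : ℕ × ℕ) : YoungDiagram :=
  ofBeads (coreBeads q.1 q.2)

theorem beads_core (q : ℕ × ℕ) : beads (core q) = coreBeads q.1 q.2 :=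
  beads_ofBeads (zero_notMem_coreBeads _ _)

/-- The quadratic polynomial giving the size of the 3-core `core (u, v)`. -/
def coreSize (q : ℕ × ℕ) : ℤ :=
  q.1 ^ 2 - q.1 * q.2 + q.2 ^ 2 + q.2

theorem card_core (q : ℕ × ℕ) : ((core q).card : ℤ) = coreSize q :=
  card_of_beads_eq_coreBeads (beads_core q)

theorem core_injective : Function.Injective core := fun q q' h => by
  have hbeads : coreBeads q.1 q.2 = coreBeads q'.1 q'.2 := by rw [← beads_core, h, beads_core]
  exact Prod.ext_iff.2 (coreBeads_inj hbeads)

theorem isThreeCore_iff_exists_core {μ : YoungDiagram} :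
    μ.IsThreeCore ↔ ∃ q, core q = μ := by
  rw [isThreeCore_iff]
  constructor
  · rintro ⟨u, v, h⟩
    exact ⟨(u, v), beads_injective (by rw [beads_core, h])⟩
  · rintro ⟨q, rfl⟩
    exact ⟨q.1, q.2, beads_core q⟩

end CoreBeads

section Counting

/-- The pairs `(u, v)` for which the 3-core `core (u, v)` has size `n`. -/
def coreParams (n : ℕ) : Finset (ℕ × ℕ) :=
  {q ∈ range (n + 1) ×ˢ range (n + 1) | coreSize q = n}

theorem mem_coreParams {n : ℕ} {q : ℕ × ℕ} : q ∈ coreParams n ↔ coreSize q = n := by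
  rw [coreParams, mem_filter, mem_product, mem_range, mem_range, and_iff_right_iff_imp, coreSize]
  intro h
  zify
  constructor
  · nlinarith [sq_nonneg (q.1 - 2 * q.2 : ℤ)]
  · nlinarith [sq_nonneg (q.2 - 2 * q.1 : ℤ)]

theorem mem_coreParams_iff_card_core {n : ℕ} {q : ℕ × ℕ} :
    q ∈ coreParams n ↔ (core q).card = n := by
  rw [mem_coreParams, ← card_core, Nat.cast_inj]

theorem a3_eq_card_coreParams (n : ℕ) : a3 n = #(coreParams n) := by
  have himage : {μ : YoungDiagram | μ.card = n ∧ μ.IsThreeCore} = core '' coreParams n := by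
    ext μ
    simp only [isThreeCore_iff_exists_core, Set.mem_image, mem_coe, mem_coreParams_iff_card_core]
    constructor
    · rintro ⟨hcard, q, rfl⟩
      exact ⟨q, hcard, rfl⟩
    · rintro ⟨q, hcard, rfl⟩
      exact ⟨hcard, q, rfl⟩
  calc a3 n = {μ : YoungDiagram | μ.card = n ∧ μ.IsThreeCore}.ncard := rfl
    _ = #(coreParams n) := by
      rw [himage, Set.ncard_image_of_injective _ core_injective, Set.ncard_coe_finset]

theorem A3_eq_sum_a3 (n : ℕ) : A3 n = ∑ ij ∈ antidiagonal n, a3 ij.1 * a3 ij.2 := by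
  let params := (antidiagonal n).biUnion fun ij => coreParams ij.1 ×ˢ coreParams ij.2
  have hdisj : (antidiagonal n : Set (ℕ × ℕ)).PairwiseDisjoint
      fun ij => coreParams ij.1 ×ˢ coreParams ij.2 := by
    rintro ij - kl - hne
    refine disjoint_left.2 fun q hij hkl => hne ?_
    simp only [mem_product, mem_coreParams_iff_card_core] at hij hkl
    exact Prod.ext (hij.1.symm.trans hkl.1) (hij.2.symm.trans hkl.2)
  have himage : {μ : YoungDiagram × YoungDiagram |
      μ.1.card + μ.2.card = n ∧ μ.1.IsThreeCore ∧ μ.2.IsThreeCore} =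
      Prod.map core core '' params := by
    ext ⟨μ, ν⟩
    simp only [isThreeCore_iff_exists_core, Set.mem_image, mem_coe, params, mem_biUnion,
      HasAntidiagonal.mem_antidiagonal, mem_product, mem_coreParams_iff_card_core, Prod.map_apply']
    constructor
    · rintro ⟨hcard, ⟨q, rfl⟩, r, rfl⟩
      exact ⟨(q, r), ⟨(_, _), hcard, rfl, rfl⟩, rfl⟩
    · rintro ⟨⟨q, r⟩, ⟨⟨_, _⟩, hij, rfl, rfl⟩, ⟨⟩⟩
      exact ⟨hij, ⟨q, rfl⟩, r, rfl⟩
  calc A3 n = {μ : YoungDiagram × YoungDiagram |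
        μ.1.card + μ.2.card = n ∧ μ.1.IsThreeCore ∧ μ.2.IsThreeCore}.ncard := rfl
    _ = #params := by
      rw [himage, Set.ncard_image_of_injective _ (core_injective.prodMap core_injective),
        Set.ncard_coe_finset]
    _ = ∑ ij ∈ antidiagonal n, a3 ij.1 * a3 ij.2 := by
      simp only [params, card_biUnion hdisj, card_product, a3_eq_card_coreParams]

end Counting

section EisensteinIntegers

open QuadraticAlgebra

/-- The Eisenstein integers `ℤ[ω]`, with `ω ^ 2 = ω - 1`: here `ω` is a primitive *sixth* root of
unity, and the norm form is `x ^ 2 + x * y + y ^ 2`. -/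
abbrev Eisenstein : Type :=
  QuadraticAlgebra ℤ (-1) 1

namespace Eisenstein

theorem norm_eq (z : Eisenstein) : z.norm = z.re ^ 2 + z.re * z.im + z.im ^ 2 := by
  rw [norm_def]
  ring

theorem four_mul_norm (z : Eisenstein) : 4 * z.norm = (2 * z.re + z.im) ^ 2 + 3 * z.im ^ 2 := by
  rw [norm_eq]
  ring

theorem norm_nonneg (z : Eisenstein) : 0 ≤ z.norm := by
  have := four_mul_norm z
  have := sq_nonneg (2 * z.re + z.im)
  have := sq_nonneg z.im
  omega

theorem intCast_norm (z : Eisenstein) : (z.norm : Eisenstein) = z * star z :=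
  algebraMap_norm_eq_mul_star z

theorem norm_eq_zero_iff {z : Eisenstein} : z.norm = 0 ↔ z = 0 := by
  refine ⟨fun h => ?_, fun h => by rw [h, QuadraticAlgebra.norm_zero]⟩
  have hsum := four_mul_norm z
  have him : z.im = 0 := by nlinarith [sq_nonneg (2 * z.re + z.im)]
  have hre : z.re = 0 := by nlinarith
  exact QuadraticAlgebra.ext hre him

theorem norm_pos {z : Eisenstein} (hz : z ≠ 0) : 0 < z.norm :=
  (norm_nonneg z).lt_of_ne' (mt norm_eq_zero_iff.1 hz)

instance : NoZeroDivisors Eisenstein where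
  eq_zero_or_eq_zero_of_mul_eq_zero {y z} h := by
    rw [← norm_eq_zero_iff, map_mul, mul_eq_zero] at h
    exact h.imp norm_eq_zero_iff.1 norm_eq_zero_iff.1

instance : IsDomain Eisenstein := NoZeroDivisors.to_isDomain _

/-- Division with remainder: both coordinates of `x / y = x * star y / norm y` are rounded to a
nearest integer. -/
def quotient (x y : Eisenstein) : Eisenstein :=
  ⟨(x * star y).re.bdiv y.norm.natAbs, (x * star y).im.bdiv y.norm.natAbs⟩

theorem sub_mul_quotient_mul_star (x y : Eisenstein) :
    (x - y * quotient x y) * star y =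
      ⟨(x * star y).re.bmod y.norm.natAbs, (x * star y).im.bmod y.norm.natAbs⟩ := by
  have hy : ((y.norm.natAbs : ℤ) : Eisenstein) = y * star y := by
    rw [Int.natAbs_of_nonneg (norm_nonneg y), intCast_norm]
  have hxy : (x - y * quotient x y) * star y =
      x * star y - ((y.norm.natAbs : ℤ) : Eisenstein) * quotient x y := by
    rw [hy]
    ring
  rw [hxy, Int.bmod_eq_self_sub_mul_bdiv, Int.bmod_eq_self_sub_mul_bdiv]
  ext <;> simp [quotient]

theorem four_mul_norm_bmod_le {m : ℕ} (hm : 0 < m) (x y : ℤ) :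
    4 * norm (⟨x.bmod m, y.bmod m⟩ : Eisenstein) ≤ 3 * m ^ 2 := by
  have two_mul_bmod (a : ℤ) : -m ≤ 2 * a.bmod m ∧ 2 * a.bmod m ≤ m := by
    have := Int.le_bmod (x := a) hm
    have := Int.bmod_le (x := a) hm
    omega
  obtain ⟨hx, hx'⟩ := two_mul_bmod x
  obtain ⟨hy, hy'⟩ := two_mul_bmod y
  rw [norm_eq]
  nlinarith [mul_nonneg (sub_nonneg.2 hx) (sub_nonneg.2 hx')]

theorem norm_sub_mul_quotient_lt (x : Eisenstein) {y : Eisenstein} (hy : y ≠ 0) :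
    norm (x - y * quotient x y) < y.norm := by
  have hpos := norm_pos hy
  have hle := four_mul_norm_bmod_le (Int.natAbs_pos.2 hpos.ne') (x * star y).re (x * star y).im
  rw [← sub_mul_quotient_mul_star, map_mul, QuadraticAlgebra.norm_star,
    Int.natAbs_of_nonneg hpos.le] at hle
  nlinarith

instance : EuclideanDomain Eisenstein where
  quotient := quotient
  quotient_zero x := by ext <;> simp [quotient]
  remainder x y := x - y * quotient x y
  quotient_mul_add_remainder_eq x y := add_sub_cancel _ _
  r := InvImage (· < ·) fun z => z.norm.natAbs
  r_wellFounded := InvImage.wf _ wellFounded_lt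
  remainder_lt x y hy := Int.natAbs_lt_natAbs_of_nonneg_of_lt (norm_nonneg _)
    (norm_sub_mul_quotient_lt x hy)
  mul_left_not_lt x y hy := by
    rw [InvImage, map_mul, Int.natAbs_mul, not_lt]
    exact Nat.le_mul_of_pos_right _ (Int.natAbs_pos.2 (norm_pos hy).ne')

instance : DecidableRel (α := Eisenstein) (· ∣ ·) := fun x y =>
  decidable_of_iff (y % x = 0) EuclideanDomain.mod_eq_zero

theorem prime_of_prime_norm {z : Eisenstein} {p : ℕ} (hp : p.Prime) (hz : z.norm = p) :
    Prime z := by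
  have : Irreducible z.norm := by rw [hz]; exact (Nat.prime_iff_prime_int.1 hp).irreducible
  have : IsLocalHom (norm : Eisenstein →* ℤ) := ⟨fun _ => isUnit_iff_norm_isUnit.2⟩
  exact (Irreducible.of_map (f := (norm : Eisenstein →* ℤ)) ‹_›).prime

theorem natCast_dvd_iff {n : ℕ} {z : Eisenstein} :
    (n : Eisenstein) ∣ z ↔ (n : ℤ) ∣ z.re ∧ (n : ℤ) ∣ z.im :=
  algebraMap_dvd_iff

theorem norm_emod_three_ne_two (z : Eisenstein) : z.norm % 3 ≠ 2 := by
  have hsq : (z.re - z.im) ^ 2 % 3 ≠ 2 := by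
    rw [pow_two, Int.mul_emod]
    obtain h | h | h : (z.re - z.im) % 3 = 0 ∨ (z.re - z.im) % 3 = 1 ∨ (z.re - z.im) % 3 = 2 := by
      omega
    all_goals norm_num [h]
  have hnorm : z.norm = (z.re - z.im) ^ 2 + 3 * (z.re * z.im) := by
    rw [norm_eq]
    ring
  omega

theorem dvd_or_star_dvd_of_dvd_norm {x z : Eisenstein} (hx : Prime x)
    (h : x ∣ (z.norm : Eisenstein)) : x ∣ z ∨ star x ∣ z := by
  rw [intCast_norm] at h
  refine (hx.dvd_or_dvd h).imp_right fun hstar => ?_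
  simpa only [starRingEnd_apply, star_star] using map_dvd (starRingEnd Eisenstein) hstar

theorem isUnit_iff {z : Eisenstein} : IsUnit z ↔ z.norm.natAbs = 1 := by
  rw [isUnit_iff_norm_isUnit, Int.isUnit_iff_natAbs_eq]

theorem prime_natCast_or_exists_norm_eq {p : ℕ} (hp : p.Prime) :
    Prime (p : Eisenstein) ∨ ∃ π : Eisenstein, π.norm = p := by
  refine or_iff_not_imp_right.2 fun hnorm =>
    Irreducible.prime ⟨fun hunit => ?_, fun x y hxy => ?_⟩
  · rw [isUnit_iff, QuadraticAlgebra.norm_natCast, Int.natAbs_pow, Int.natAbs_natCast,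
      Nat.pow_eq_one] at hunit
    exact hunit.elim hp.ne_one two_ne_zero
  · have hmul : x.norm.natAbs * y.norm.natAbs = p ^ 2 := by
      rw [← Int.natAbs_mul, ← map_mul, ← hxy, QuadraticAlgebra.norm_natCast, Int.natAbs_pow,
        Int.natAbs_natCast]
    rw [isUnit_iff, isUnit_iff]
    by_contra! hne
    refine hnorm ⟨x, ?_⟩
    rw [← ((hp.mul_eq_prime_sq_iff hne.1 hne.2).1 hmul).1, Int.natAbs_of_nonneg (norm_nonneg x)]

theorem prime_natCast_of_mod_three_eq_two {p : ℕ} (hp : p.Prime) (hp3 : p % 3 = 2) :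
    Prime (p : Eisenstein) := by
  refine (prime_natCast_or_exists_norm_eq hp).resolve_right ?_
  rintro ⟨π, hπ⟩
  have := norm_emod_three_ne_two π
  omega

theorem exists_dvd_sq_add_self_add_one {p : ℕ} (hp : p.Prime) (hp3 : p % 3 = 1) :
    ∃ t : ℤ, (p : ℤ) ∣ t ^ 2 + t + 1 := by
  have := Fact.mk hp
  obtain ⟨ζ, hζ⟩ : ∃ ζ : (ZMod p)ˣ, orderOf ζ = 3 := by
    have := Fact.mk Nat.prime_three
    refine exists_prime_orderOf_dvd_card 3 ?_
    rw [ZMod.card_units]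
    omega
  have hroot : (ζ : ZMod p) ^ 2 + ζ + 1 = 0 := by
    have hone : (ζ : ZMod p) ≠ 1 := by
      rw [Ne, Units.val_eq_one, ← orderOf_eq_one_iff, hζ]
      decide
    have hcube : (ζ : ZMod p) ^ 3 = 1 := by
      rw [← Units.val_pow_eq_pow_val, ← hζ, pow_orderOf_eq_one, Units.val_one]
    refine (mul_eq_zero.1 ?_).resolve_left (sub_ne_zero.2 hone)
    linear_combination hcube
  refine ⟨((ζ : ZMod p).val : ℤ), (ZMod.intCast_zmod_eq_zero_iff_dvd _ p).1 ?_⟩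
  push_cast
  rwa [ZMod.natCast_val, ZMod.cast_id]

theorem exists_norm_eq_of_mod_three_eq_one {p : ℕ} (hp : p.Prime) (hp3 : p % 3 = 1) :
    ∃ π : Eisenstein, π.norm = p := by
  refine (prime_natCast_or_exists_norm_eq hp).resolve_left fun hprime => ?_
  obtain ⟨t, ht⟩ := exists_dvd_sq_add_self_add_one hp hp3
  let z : Eisenstein := ⟨t, 1⟩
  have hz : (p : Eisenstein) ∣ z * star z := by
    rw [← intCast_norm, norm_eq, one_pow, mul_one]
    exact natCast_dvd_iff.2 ⟨ht, dvd_zero _⟩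
  have not_dvd_one : ¬ (p : ℤ) ∣ 1 := (Nat.prime_iff_prime_int.1 hp).not_dvd_one
  obtain h | h := hprime.dvd_or_dvd hz
  · exact not_dvd_one (natCast_dvd_iff.1 h).2
  · exact not_dvd_one (by simpa [z] using (natCast_dvd_iff.1 h).2)

theorem not_dvd_star {p : ℕ} (hp : p.Prime) (hp3 : p ≠ 3) {π : Eisenstein} (hπ : π.norm = p) :
    ¬ π ∣ star π := by
  intro hdvd
  have hp' := Nat.prime_iff_prime_int.1 hp
  have hnorm : (p : ℤ) ∣ 3 * π.im ^ 2 := by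
    have hsub : norm (π - star π) = 3 * π.im ^ 2 := by
      rw [norm_eq, re_sub, im_sub, re_star, im_star]
      ring
    rw [← hπ, ← hsub]
    exact map_dvd QuadraticAlgebra.norm (dvd_sub_self_left.2 hdvd)
  have him : (p : ℤ) ∣ π.im := by
    refine hp'.dvd_of_dvd_pow ((hp'.dvd_or_dvd hnorm).resolve_left fun h => hp3 ?_)
    exact (Nat.prime_dvd_prime_iff_eq hp Nat.prime_three).1 (by exact_mod_cast h)
  have hre : (p : ℤ) ∣ π.re := by
    refine hp'.dvd_of_dvd_pow (n := 2) ?_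
    have : π.re ^ 2 = p - π.im * (π.re + π.im) := by
      rw [← hπ, norm_eq]
      ring
    rw [this]
    exact dvd_sub dvd_rfl (him.mul_right _)
  have hsq : (p : ℤ) ^ 2 ∣ p := by
    have := map_dvd (norm : Eisenstein →* ℤ) (natCast_dvd_iff.2 ⟨hre, him⟩)
    rwa [QuadraticAlgebra.norm_natCast, hπ] at this
  exact hp'.not_isUnit (hp'.squarefree _ (by rwa [← sq]))

end Eisenstein

end EisensteinIntegers

section Hecke

variable {R : Type*} [CommRing R] {N : ℕ} (χ : DirichletCharacter R N)

/-- The Hecke relations `f (p * m) + χ p * f (m / p) = (1 + χ p) * f m` at all primes `p`, with the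
convention `f (m / p) = 0` if `p` does not divide `m`. -/
def IsHecke (f : ℕ → R) : Prop :=
  ∀ p m : ℕ, p.Prime → m ≠ 0 →
    f (p * m) + χ p * (if p ∣ m then f (m / p) else 0) = (1 + χ p) * f m

/-- The divisor sum `∑_{d ∣ m} χ d` of a Dirichlet character. -/
def divisorSum (m : ℕ) : R :=
  ∑ d ∈ m.divisors, χ d

theorem filter_dvd_divisors_mul {p m : ℕ} (hp : p ≠ 0) (hm : m ≠ 0) :
    {d ∈ (p * m).divisors | p ∣ d} = m.divisors.image (p * ·) := by
  ext d
  simp only [mem_filter, Nat.mem_divisors, mem_image]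
  constructor
  · rintro ⟨⟨hd, -⟩, k, rfl⟩
    exact ⟨k, ⟨Nat.dvd_of_mul_dvd_mul_left (Nat.pos_of_ne_zero hp) hd, hm⟩, rfl⟩
  · rintro ⟨k, ⟨hk, -⟩, rfl⟩
    exact ⟨⟨mul_dvd_mul_left p hk, mul_ne_zero hp hm⟩, dvd_mul_right p k⟩

theorem sum_filter_dvd_divisors_mul {p m : ℕ} (hp : p ≠ 0) (hm : m ≠ 0) :
    ∑ d ∈ (p * m).divisors with p ∣ d, χ d = χ p * divisorSum χ m := by
  rw [filter_dvd_divisors_mul hp hm, sum_image (mul_right_injective₀ hp).injOn, divisorSum, mul_sum]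
  exact sum_congr rfl fun d _ => by rw [Nat.cast_mul, map_mul]

theorem sum_filter_dvd_divisors (p : ℕ) {m : ℕ} (hm : m ≠ 0) :
    ∑ d ∈ m.divisors with p ∣ d, χ d = χ p * (if p ∣ m then divisorSum χ (m / p) else 0) := by
  split_ifs with hpm
  · obtain ⟨k, rfl⟩ := hpm
    obtain ⟨hp, hk⟩ := mul_ne_zero_iff.1 hm
    rw [sum_filter_dvd_divisors_mul χ hp hk, Nat.mul_div_cancel_left k (Nat.pos_of_ne_zero hp)]
  · rw [mul_zero]
    refine sum_eq_zero fun d hd => absurd ?_ hpm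
    rw [mem_filter, Nat.mem_divisors] at hd
    exact hd.2.trans hd.1.1

theorem isHecke_divisorSum : IsHecke χ (divisorSum χ) := by
  intro p m hp hm
  have hpm : p * m ≠ 0 := mul_ne_zero hp.ne_zero hm
  have hdvd_of_not_dvd : {d ∈ (p * m).divisors | ¬ p ∣ d} = {d ∈ m.divisors | ¬ p ∣ d} := by
    ext d
    simp only [mem_filter, Nat.mem_divisors, hpm, hm, ne_eq, not_false_eq_true, and_true]
    exact and_congr_left fun hd => ((hp.coprime_iff_not_dvd.2 hd).symm).dvd_mul_left
  have hsplit_mul := sum_filter_add_sum_filter_not (p * m).divisors (p ∣ ·)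
    (fun d => χ (d : ZMod N))
  have hsplit := sum_filter_add_sum_filter_not m.divisors (p ∣ ·) (fun d => χ (d : ZMod N))
  rw [sum_filter_dvd_divisors_mul χ hp.ne_zero hm, hdvd_of_not_dvd] at hsplit_mul
  rw [sum_filter_dvd_divisors χ p hm] at hsplit
  change _ = divisorSum χ _ at hsplit hsplit_mul
  linear_combination hsplit - hsplit_mul

variable {χ}

theorem IsHecke.eq_mul_divisorSum {f : ℕ → R} (hf : IsHecke χ f) {m : ℕ} (hm : m ≠ 0) :
    f m = f 1 * divisorSum χ m := by
  induction m using Nat.strong_induction_on with | _ m ih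
  obtain rfl | hm1 := eq_or_ne m 1
  · simp [divisorSum]
  obtain ⟨p, hp, k, rfl⟩ := Nat.exists_prime_and_dvd hm1
  have hk : k ≠ 0 := right_ne_zero_of_mul hm
  have hk_lt : k < p * k := lt_mul_of_one_lt_left (Nat.pos_of_ne_zero hk) hp.one_lt
  have ih_div : (if p ∣ k then f (k / p) else 0) =
      f 1 * (if p ∣ k then divisorSum χ (k / p) else 0) := by
    split_ifs with hpk
    · exact ih _ ((Nat.div_le_self k p).trans_lt hk_lt) (Nat.div_ne_zero_iff_of_dvd hpk |>.2
        ⟨hk, hp.ne_zero⟩)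
    · rw [mul_zero]
  have hf' := hf p k hp hk
  rw [ih_div, ih k hk_lt hk] at hf'
  linear_combination hf' - f 1 * isHecke_divisorSum χ p k hp hk

end Hecke

section NormSet

open QuadraticAlgebra

/-- The finite set of Eisenstein integers of norm `m`. -/
noncomputable def normSet (m : ℕ) : Finset Eisenstein :=
  {z ∈ (Icc (-m : ℤ) m ×ˢ Icc (-m : ℤ) m).map (equivProd (-1) 1).symm.toEmbedding | z.norm = m}

namespace Eisenstein

theorem mem_normSet {m : ℕ} {z : Eisenstein} : z ∈ normSet m ↔ z.norm = m := by
  rw [normSet, mem_filter, mem_map_equiv, Equiv.symm_symm, mem_product, mem_Icc, mem_Icc,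
    and_iff_right_iff_imp, norm_eq]
  intro h
  change (-(m : ℤ) ≤ z.re ∧ z.re ≤ m) ∧ -(m : ℤ) ≤ z.im ∧ z.im ≤ m
  have := sq_nonneg (2 * z.re + z.im)
  have := sq_nonneg (z.re + 2 * z.im)
  refine ⟨⟨?_, ?_⟩, ?_, ?_⟩ <;> nlinarith

theorem card_filter_dvd_normSet {a : Eisenstein} {k : ℕ} (hk : k ≠ 0) (ha : a.norm = k) (m : ℕ) :
    #{z ∈ normSet (k * m) | a ∣ z} = #(normSet m) := by
  have ha0 : a ≠ 0 := by
    rintro rfl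
    exact hk (by simpa using ha.symm)
  have himage : {z ∈ normSet (k * m) | a ∣ z} = (normSet m).image (a * ·) := by
    ext z
    simp only [mem_filter, mem_image, mem_normSet, Nat.cast_mul]
    constructor
    · rintro ⟨hz, w, rfl⟩
      rw [map_mul, ha] at hz
      exact ⟨w, mul_left_cancel₀ (Nat.cast_ne_zero.2 hk) hz, rfl⟩
    · rintro ⟨w, hw, rfl⟩
      exact ⟨by rw [map_mul, ha, hw], dvd_mul_right a w⟩
  rw [himage, card_image_of_injective _ (mul_right_injective₀ ha0)]

theorem card_filter_natCast_dvd_normSet {p : ℕ} (hp : p ≠ 0) (m : ℕ) :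
    #{z ∈ normSet (p * m) | (p : Eisenstein) ∣ z} = if p ∣ m then #(normSet (m / p)) else 0 := by
  have hnorm : norm (p : Eisenstein) = ((p ^ 2 : ℕ) : ℤ) := by
    rw [QuadraticAlgebra.norm_natCast, Nat.cast_pow]
  split_ifs with hpm
  · obtain ⟨k, rfl⟩ := hpm
    rw [Nat.mul_div_cancel_left k (Nat.pos_of_ne_zero hp), ← mul_assoc, ← sq,
      card_filter_dvd_normSet (pow_ne_zero 2 hp) hnorm]
  · refine card_eq_zero.2 (filter_eq_empty_iff.2 fun z hz hdvd => hpm ?_)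
    have := map_dvd (QuadraticAlgebra.norm : Eisenstein →* ℤ) hdvd
    rw [hnorm, mem_normSet.1 hz, Int.natCast_dvd_natCast, sq] at this
    exact Nat.dvd_of_mul_dvd_mul_left (Nat.pos_of_ne_zero hp) this

theorem card_normSet_mul_of_mod_three_eq_two {p : ℕ} (hp : p.Prime) (hp3 : p % 3 = 2) (m : ℕ) :
    #(normSet (p * m)) = if p ∣ m then #(normSet (m / p)) else 0 := by
  rw [← card_filter_natCast_dvd_normSet hp.ne_zero, filter_true_of_mem]
  intro z hz
  have hdvd : (p : Eisenstein) ∣ (z.norm : Eisenstein) := by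
    rw [mem_normSet.1 hz, Int.cast_natCast, Nat.cast_mul]
    exact dvd_mul_right _ _
  have hprime := prime_natCast_of_mod_three_eq_two hp hp3
  simpa only [star_natCast, or_self] using dvd_or_star_dvd_of_dvd_norm hprime hdvd

theorem dvd_or_star_dvd_of_mem_normSet {p m : ℕ} (hp : p.Prime) {π z : Eisenstein}
    (hπ : π.norm = p) (hz : z ∈ normSet (p * m)) : π ∣ z ∨ star π ∣ z := by
  refine dvd_or_star_dvd_of_dvd_norm (prime_of_prime_norm hp hπ) ?_
  rw [mem_normSet.1 hz, Nat.cast_mul, Int.cast_mul, ← hπ, intCast_norm, mul_assoc]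
  exact dvd_mul_right _ _

theorem dvd_and_star_dvd_iff {p : ℕ} (hp : p.Prime) (hp3 : p ≠ 3) {π z : Eisenstein}
    (hπ : π.norm = p) : π ∣ z ∧ star π ∣ z ↔ (p : Eisenstein) ∣ z := by
  have hp_eq : (p : Eisenstein) = star π * π := by
    rw [mul_comm, ← intCast_norm, hπ, Int.cast_natCast]
  rw [hp_eq]
  refine ⟨?_, fun h => ⟨dvd_of_mul_left_dvd h, dvd_of_mul_right_dvd h⟩⟩
  rintro ⟨h, w, rfl⟩
  exact mul_dvd_mul_left _
    (((prime_of_prime_norm hp hπ).dvd_or_dvd h).resolve_left (not_dvd_star hp hp3 hπ))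

theorem card_normSet_mul_of_mod_three_eq_one {p : ℕ} (hp : p.Prime) (hp3 : p % 3 = 1) (m : ℕ) :
    #(normSet (p * m)) + (if p ∣ m then #(normSet (m / p)) else 0) = 2 * #(normSet m) := by
  obtain ⟨π, hπ⟩ := exists_norm_eq_of_mod_three_eq_one hp hp3
  have hπ_star : (star π).norm = p := by rw [QuadraticAlgebra.norm_star, hπ]
  have hunion : {z ∈ normSet (p * m) | π ∣ z} ∪ {z ∈ normSet (p * m) | star π ∣ z} =
      normSet (p * m) := by
    rw [← filter_or]
    exact filter_true_of_mem fun z => dvd_or_star_dvd_of_mem_normSet hp hπ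
  have hinter : {z ∈ normSet (p * m) | π ∣ z} ∩ {z ∈ normSet (p * m) | star π ∣ z} =
      {z ∈ normSet (p * m) | (p : Eisenstein) ∣ z} := by
    rw [← filter_and]
    exact filter_congr fun z _ => dvd_and_star_dvd_iff hp (by omega) hπ
  have hcard := card_union_add_card_inter {z ∈ normSet (p * m) | π ∣ z}
    {z ∈ normSet (p * m) | star π ∣ z}
  rw [hunion, hinter, card_filter_natCast_dvd_normSet hp.ne_zero,
    card_filter_dvd_normSet hp.ne_zero hπ, card_filter_dvd_normSet hp.ne_zero hπ_star] at hcard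
  rw [hcard, two_mul]

theorem card_normSet_three_mul (m : ℕ) : #(normSet (3 * m)) = #(normSet m) := by
  have hπ : norm (⟨1, 1⟩ : Eisenstein) = (3 : ℕ) := by rw [norm_eq]; norm_num
  rw [← card_filter_dvd_normSet three_ne_zero hπ m, filter_true_of_mem]
  intro z hz
  refine (dvd_or_star_dvd_of_mem_normSet Nat.prime_three hπ hz).elim id (dvd_trans ⟨⟨1, -1⟩, ?_⟩)
  ext <;> simp

theorem isHecke_card_normSet :
    IsHecke (quadraticChar (ZMod 3)) fun m => (#(normSet m) : ℤ) := by
  intro p m hp _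
  dsimp only
  obtain h | h | h : p % 3 = 0 ∨ p % 3 = 1 ∨ p % 3 = 2 := by omega
  · obtain rfl : 3 = p :=
      (Nat.prime_dvd_prime_iff_eq Nat.prime_three hp).1 (Nat.dvd_of_mod_eq_zero h)
    rw [card_normSet_three_mul, show quadraticChar (ZMod 3) (3 : ℕ) = 0 by decide]
    ring
  · have hcard := congrArg ((↑) : ℕ → ℤ) (card_normSet_mul_of_mod_three_eq_one hp h m)
    rw [← ZMod.natCast_mod p 3, h, show quadraticChar (ZMod 3) (1 : ℕ) = 1 by decide]
    push_cast at hcard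
    linear_combination hcard
  · have hcard := congrArg ((↑) : ℕ → ℤ) (card_normSet_mul_of_mod_three_eq_two hp h m)
    rw [← ZMod.natCast_mod p 3, h, show quadraticChar (ZMod 3) (2 : ℕ) = -1 by decide]
    push_cast at hcard
    linear_combination hcard

end Eisenstein

end NormSet

section Orbits

theorem card_filter_iterate_eq_one {α : Type*} {f : α → α} {k : ℕ} {P : α → Prop}
    [DecidablePred P] (hdisj : ∀ z, P z → ∀ i, 0 < i → i < k → ¬ P (f^[i] z)) {z : α}
    (hz : ∃ i < k, P (f^[i] z)) : #{i ∈ range k | P (f^[i] z)} = 1 := by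
  obtain ⟨i, hik, hi⟩ := hz
  have not_lt {i j : ℕ} (hi : P (f^[i] z)) (hjk : j < k) (hj : P (f^[j] z)) : ¬ i < j := by
    intro hij
    refine hdisj _ hi (j - i) (by omega) (by omega) ?_
    rwa [← Function.iterate_add_apply, Nat.sub_add_cancel hij.le]
  refine card_eq_one.2 ⟨i, eq_singleton_iff_unique_mem.2 ⟨by simp [hik, hi], fun j hj => ?_⟩⟩
  rw [mem_filter, mem_range] at hj
  have := not_lt hi hj.1 hj.2
  have := not_lt hj.2 hik hi
  omega

-- `P` cuts out a fundamental domain for the powers `f^0, …, f^(k-1)`.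
theorem card_eq_mul_card_filter {α : Type*} {s : Finset α} {f : α → α} {k : ℕ} {P : α → Prop}
    [DecidablePred P] (hf : f.Injective) (hfs : Set.MapsTo f s s)
    (hdisj : ∀ z, P z → ∀ i, 0 < i → i < k → ¬ P (f^[i] z))
    (hcover : ∀ z ∈ s, ∃ i < k, P (f^[i] z)) : #s = k * #{z ∈ s | P z} := by
  classical
  have card_shift (i : ℕ) : #{z ∈ s | P (f^[i] z)} = #{z ∈ s | P z} := by
    have himage : s.image f^[i] = s :=
      eq_of_subset_of_card_le (image_subset_iff.2 (hfs.iterate i))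
        (card_image_of_injective s (hf.iterate i)).ge
    conv_rhs => rw [← himage, filter_image, card_image_of_injective _ (hf.iterate i)]
  calc #s
    _ = ∑ z ∈ s, #{i ∈ range k | P (f^[i] z)} := by
      rw [card_eq_sum_ones,
        sum_congr rfl fun z hz => card_filter_iterate_eq_one hdisj (hcover z hz)]
    _ = ∑ i ∈ range k, #{z ∈ s | P (f^[i] z)} :=
      sum_card_bipartiteAbove_eq_sum_card_bipartiteBelow fun z i => P (f^[i] z)
    _ = k * #{z ∈ s | P z} := by
      simp only [card_shift, sum_const, card_range, smul_eq_mul]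

namespace Eisenstein

open QuadraticAlgebra

/-- The sixth of the plane, cut down to a residue class modulo `1 + ω`, that `ofCore`
identifies with the 3-cores. -/
def IsCoreSector (z : Eisenstein) : Prop :=
  (z.re - z.im) % 3 = 1 ∧ 0 < 2 * z.re + z.im ∧ 0 < z.re + 2 * z.im

instance : DecidablePred IsCoreSector := fun _ =>
  inferInstanceAs (Decidable (_ ∧ _))

theorem omega_pow_two : (omega : Eisenstein) ^ 2 = ⟨-1, 1⟩ := by
  rw [sq, omega_mul_omega_eq_mk]

theorem omega_pow_three : (omega : Eisenstein) ^ 3 = -1 := by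
  rw [pow_succ', omega_pow_two, omega_mul_mk]
  rfl

theorem omega_pow_add_three (i : ℕ) : (omega : Eisenstein) ^ (i + 3) = -omega ^ i := by
  rw [pow_add, omega_pow_three, mul_neg_one]

theorem not_isCoreSector_omega_pow_mul {z : Eisenstein} (hz : IsCoreSector z) {i : ℕ} (hi : 0 < i)
    (hi6 : i < 6) : ¬ IsCoreSector (omega ^ i * z) := by
  obtain ⟨hmod, hre, him⟩ := hz
  rintro ⟨hmod', hre', him'⟩
  interval_cases i <;>
    simp only [omega_pow_add_three 0, omega_pow_add_three 1, omega_pow_add_three 2, omega_pow_two,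
      pow_zero, pow_one, re_mul, im_mul, re_neg, im_neg, re_one, im_one, omega_re,
      omega_im] at hmod' hre' him' <;>
    omega

theorem re_sub_im_emod_three_ne_zero {n : ℕ} {z : Eisenstein} (hz : z ∈ normSet (3 * n + 1)) :
    (z.re - z.im) % 3 ≠ 0 := by
  intro h
  obtain ⟨k, hk⟩ := Int.dvd_of_emod_eq_zero h
  have hnorm : (z.re - z.im) ^ 2 + 3 * (z.re * z.im) = 3 * n + 1 := by
    rw [mem_normSet, norm_eq] at hz
    push_cast at hz
    linear_combination hz
  rw [hk, mul_pow, sq 3, mul_assoc] at hnorm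
  omega

theorem exists_isCoreSector_omega_pow_mul {z : Eisenstein} (hz : (z.re - z.im) % 3 ≠ 0) :
    ∃ i < 6, IsCoreSector (omega ^ i * z) := by
  have hsectors :
      ((z.re - z.im) % 3 = 1 ∧ 0 < 2 * z.re + z.im ∧ 0 < z.re + 2 * z.im) ∨
      ((z.re - z.im) % 3 = 2 ∧ z.im < z.re ∧ 0 < 2 * z.re + z.im) ∨
      ((z.re - z.im) % 3 = 1 ∧ z.re + 2 * z.im < 0 ∧ z.im < z.re) ∨
      ((z.re - z.im) % 3 = 2 ∧ 2 * z.re + z.im < 0 ∧ z.re + 2 * z.im < 0) ∨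
      ((z.re - z.im) % 3 = 1 ∧ z.re < z.im ∧ 2 * z.re + z.im < 0) ∨
      ((z.re - z.im) % 3 = 2 ∧ 0 < z.re + 2 * z.im ∧ z.re < z.im) := by omega
  rcases hsectors with h | h | h | h | h | h <;>
    [use 0; use 1; use 2; use 3; use 4; use 5] <;>
    simp only [IsCoreSector, omega_pow_add_three 0, omega_pow_add_three 1, omega_pow_add_three 2,
      omega_pow_two, pow_zero, pow_one, re_mul, im_mul, re_neg, im_neg, re_one, im_one, omega_re,
      omega_im] <;>
    omega

/-- The Eisenstein integer attached to the 3-core `core (u, v)`. -/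
def ofCore (q : ℕ × ℕ) : Eisenstein :=
  ⟨2 * q.2 - q.1 + 1, 2 * q.1 - q.2⟩

theorem norm_ofCore (q : ℕ × ℕ) : (ofCore q).norm = 3 * coreSize q + 1 := by
  rw [norm_eq, ofCore, coreSize]
  ring

theorem ofCore_injective : Function.Injective ofCore := fun q r h => by
  simp only [ofCore, QuadraticAlgebra.mk.injEq] at h
  exact Prod.ext (by omega) (by omega)

theorem exists_ofCore_eq_iff {z : Eisenstein} : (∃ q, ofCore q = z) ↔ IsCoreSector z := by
  constructor
  · rintro ⟨q, rfl⟩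
    refine ⟨?_, ?_, ?_⟩ <;> simp only [ofCore] <;> omega
  · rintro ⟨hmod, hre, him⟩
    refine ⟨(((z.re + 2 * z.im) / 3).toNat, ((2 * z.re + z.im) / 3).toNat), ?_⟩
    ext <;> simp only [ofCore] <;> omega

theorem filter_isCoreSector_normSet (n : ℕ) :
    {z ∈ normSet (3 * n + 1) | IsCoreSector z} = (coreParams n).image ofCore := by
  ext z
  rw [mem_filter, mem_image, mem_normSet, ← exists_ofCore_eq_iff]
  have norm_iff (q : ℕ × ℕ) : (ofCore q).norm = ((3 * n + 1 : ℕ) : ℤ) ↔ q ∈ coreParams n := by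
    rw [norm_ofCore, mem_coreParams]
    push_cast
    omega
  constructor
  · rintro ⟨hnorm, q, rfl⟩
    exact ⟨q, (norm_iff q).1 hnorm, rfl⟩
  · rintro ⟨q, hq, rfl⟩
    exact ⟨(norm_iff q).2 hq, q, rfl⟩

theorem card_normSet_three_mul_add_one (n : ℕ) : #(normSet (3 * n + 1)) = 6 * a3 n := by
  have homega : omega ≠ (0 : Eisenstein) := fun h => one_ne_zero (congrArg im h)
  have hmaps : Set.MapsTo (omega * ·) (normSet (3 * n + 1) : Set Eisenstein)
      (normSet (3 * n + 1)) := fun z hz => by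
    rw [mem_coe, mem_normSet] at hz ⊢
    rw [map_mul, hz, norm_eq, omega_re, omega_im]
    ring
  have hdisj (z : Eisenstein) (hz : IsCoreSector z) (i : ℕ) (hi : 0 < i) (hi6 : i < 6) :
      ¬ IsCoreSector ((omega * ·)^[i] z) := by
    rw [mul_left_iterate]
    exact not_isCoreSector_omega_pow_mul hz hi hi6
  have hcover (z : Eisenstein) (hz : z ∈ normSet (3 * n + 1)) :
      ∃ i < 6, IsCoreSector ((omega * ·)^[i] z) := by
    simp only [mul_left_iterate]
    exact exists_isCoreSector_omega_pow_mul (re_sub_im_emod_three_ne_zero hz)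
  rw [card_eq_mul_card_filter (mul_right_injective₀ homega) hmaps hdisj hcover,
    filter_isCoreSector_normSet,
    card_image_of_injective _ ofCore_injective, a3_eq_card_coreParams]

end Eisenstein

theorem a3_zero : a3 0 = 1 := by
  rw [a3_eq_card_coreParams]
  rfl

theorem a3_eq_divisorSum (n : ℕ) :
    (a3 n : ℤ) = divisorSum (quadraticChar (ZMod 3)) (3 * n + 1) := by
  have hn := Eisenstein.card_normSet_three_mul_add_one n
  have hone := Eisenstein.card_normSet_three_mul_add_one 0
  have hecke := Eisenstein.isHecke_card_normSet.eq_mul_divisorSum (Nat.succ_ne_zero (3 * n))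
  rw [a3_zero, mul_zero, zero_add] at hone
  rw [Nat.succ_eq_add_one, hn, hone] at hecke
  push_cast at hecke
  linarith

end Orbits

section Liouville

variable {R : Type*} [CommRing R]

/-- The set of `((a, x), (b, y))` with `a, x, b, y` positive and `a * x + b * y = n`. -/
def quadruples (n : ℕ) : Finset ((ℕ × ℕ) × ℕ × ℕ) :=
  (antidiagonal n).biUnion fun ij => ij.1.divisorsAntidiagonal ×ˢ ij.2.divisorsAntidiagonal

theorem mem_quadruples {n a x b y : ℕ} :
    ((a, x), (b, y)) ∈ quadruples n ↔
      0 < a ∧ 0 < x ∧ 0 < b ∧ 0 < y ∧ a * x + b * y = n := by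
  simp only [quadruples, mem_biUnion, HasAntidiagonal.mem_antidiagonal, mem_product,
    Nat.mem_divisorsAntidiagonal, Nat.pos_iff_ne_zero]
  constructor
  · rintro ⟨⟨i, j⟩, hn, ⟨rfl, hi⟩, rfl, hj⟩
    rw [mul_ne_zero_iff] at hi hj
    exact ⟨hi.1, hi.2, hj.1, hj.2, hn⟩
  · rintro ⟨ha, hx, hb, hy, hn⟩
    exact ⟨(a * x, b * y), hn, ⟨rfl, mul_ne_zero ha hx⟩, rfl, mul_ne_zero hb hy⟩

theorem sum_antidiagonal_divisorSum_mul_divisorSum {N : ℕ} (χ : DirichletCharacter R N) (n : ℕ) :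
    ∑ ij ∈ antidiagonal n, divisorSum χ ij.1 * divisorSum χ ij.2 =
      ∑ t ∈ quadruples n, χ t.1.1 * χ t.2.1 := by
  have hdisj : (antidiagonal n : Set (ℕ × ℕ)).PairwiseDisjoint fun ij =>
      ij.1.divisorsAntidiagonal ×ˢ ij.2.divisorsAntidiagonal := by
    refine fun ij _ kl _ hne => disjoint_left.2 fun t hij hkl => hne ?_
    simp only [mem_product, Nat.mem_divisorsAntidiagonal] at hij hkl
    exact Prod.ext (hij.1.1.symm.trans hkl.1.1) (hij.2.1.symm.trans hkl.2.1)
  rw [quadruples, sum_biUnion hdisj]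
  refine sum_congr rfl fun ij _ => ?_
  rw [sum_product, divisorSum, divisorSum, ← Nat.sum_divisorsAntidiagonal fun d _ => χ d,
    ← Nat.sum_divisorsAntidiagonal fun d _ => χ d, sum_mul_sum]

section AddCommMonoid

variable {M : Type*} [AddCommMonoid M]

theorem sum_eq_sum_lt_add_sum_eq_add_sum_gt {α β : Type*} [LinearOrder β] (s : Finset α)
    (u v : α → β) (f : α → M) :
    ∑ t ∈ s, f t =
      ∑ t ∈ s with u t < v t, f t + ∑ t ∈ s with u t = v t, f t + ∑ t ∈ s with v t < u t, f t := by
  simp only [sum_filter, ← sum_add_distrib]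
  refine sum_congr rfl fun t _ => ?_
  obtain h | h | h := lt_trichotomy (u t) (v t)
  · simp [h, h.ne, h.not_gt]
  · simp [h]
  · simp [h, h.ne', h.not_gt]

theorem sum_filter_quadruples_swap (n : ℕ) (P : (ℕ × ℕ) × ℕ × ℕ → Prop) [DecidablePred P]
    (f : (ℕ × ℕ) × ℕ × ℕ → M) :
    ∑ t ∈ quadruples n with P t.swap, f t.swap = ∑ t ∈ quadruples n with P t, f t := by
  have hmem (t : (ℕ × ℕ) × ℕ × ℕ) : t.swap ∈ quadruples n ↔ t ∈ quadruples n := by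
    obtain ⟨⟨a, x⟩, b, y⟩ := t
    simp only [Prod.swap_prod_mk, mem_quadruples, add_comm]
    tauto
  exact sum_bij' (fun t _ => t.swap) (fun t _ => t.swap) (by simp [hmem]) (by simp [hmem])
    (by simp) (by simp) (by simp)

theorem card_filter_quadruples_fst_eq (n : ℕ) :
    #{t ∈ quadruples n | t.1.1 = t.2.1} = #{t ∈ quadruples n | t.1.2 = t.2.2} := by
  have hmem (t : (ℕ × ℕ) × ℕ × ℕ) : (t.1.swap, t.2.swap) ∈ quadruples n ↔ t ∈ quadruples n := by
    obtain ⟨⟨a, x⟩, b, y⟩ := t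
    simp only [Prod.swap_prod_mk, mem_quadruples, mul_comm]
    tauto
  exact card_bij' (fun t _ => (t.1.swap, t.2.swap)) (fun t _ => (t.1.swap, t.2.swap))
    (by simp [hmem]) (by simp [hmem]) (by simp) (by simp)

-- The bijection rests on `a * x + b * y = (a - b) * x + b * (x + y)`.
theorem sum_filter_quadruples_fst_gt (n : ℕ) (g : ℕ → ℕ → M) :
    ∑ t ∈ quadruples n with t.2.1 < t.1.1, g t.1.1 t.2.1 =
      ∑ t ∈ quadruples n with t.1.2 < t.2.2, g (t.1.1 + t.2.1) t.2.1 := by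
  refine sum_bij' (fun t _ => ((t.1.1 - t.2.1, t.1.2), (t.2.1, t.1.2 + t.2.2)))
    (fun t _ => ((t.1.1 + t.2.1, t.1.2), (t.2.1, t.2.2 - t.1.2))) ?_ ?_ ?_ ?_ ?_
  all_goals
    rintro ⟨⟨a, x⟩, b, y⟩ ht
    simp only [mem_filter, mem_quadruples] at ht ⊢
    obtain ⟨⟨ha, hx, hb, hy, rfl⟩, hlt⟩ := ht
  · obtain ⟨c, rfl⟩ := Nat.exists_eq_add_of_lt hlt
    refine ⟨⟨by omega, hx, hb, by omega, ?_⟩, by omega⟩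
    rw [add_assoc, Nat.add_sub_cancel_left]
    ring
  · obtain ⟨c, rfl⟩ := Nat.exists_eq_add_of_lt hlt
    refine ⟨⟨by omega, hx, hb, by omega, ?_⟩, by omega⟩
    rw [add_assoc x, Nat.add_sub_cancel_left]
    ring
  · rw [Nat.sub_add_cancel hlt.le, Nat.add_sub_cancel_left]
  · rw [Nat.add_sub_cancel, Nat.add_sub_cancel' hlt.le]
  · rw [Nat.sub_add_cancel hlt.le]

theorem sum_filter_quadruples_snd_eq (n : ℕ) (g : ℕ → M) :
    ∑ t ∈ quadruples n with t.1.2 = t.2.2, g t.1.1 = ∑ d ∈ n.divisors, ∑ c ∈ Ioo 0 d, g c := by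
  rw [← Nat.sum_divisorsAntidiagonal fun d _ => ∑ c ∈ Ioo 0 d, g c, sum_sigma']
  refine sum_bij' (fun t _ => ⟨(t.1.1 + t.2.1, t.1.2), t.1.1⟩)
    (fun s _ => ((s.2, s.1.2), (s.1.1 - s.2, s.1.2))) ?_ ?_ ?_ ?_ ?_
  · rintro ⟨⟨a, x⟩, b, y⟩ ht
    simp only [mem_filter, mem_quadruples] at ht
    obtain ⟨⟨ha, hx, hb, -, rfl⟩, rfl⟩ := ht
    simp only [mem_sigma, Nat.mem_divisorsAntidiagonal, mem_Ioo]
    exact ⟨⟨by ring, by positivity⟩, ha, by omega⟩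
  · rintro ⟨⟨d, e⟩, c⟩ hs
    simp only [mem_sigma, Nat.mem_divisorsAntidiagonal, mem_Ioo] at hs
    obtain ⟨⟨rfl, hde⟩, hc, hcd⟩ := hs
    simp only [mem_filter, mem_quadruples, and_true]
    have he := Nat.pos_of_ne_zero (right_ne_zero_of_mul hde)
    exact ⟨hc, he, by omega, he, by rw [← add_mul, Nat.add_sub_cancel' hcd.le]⟩
  · rintro ⟨⟨a, x⟩, b, y⟩ ht
    simp only [mem_filter] at ht
    simp only [Nat.add_sub_cancel_left, ht.2]
  · rintro ⟨⟨d, e⟩, c⟩ hs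
    simp only [mem_sigma, mem_Ioo] at hs
    simp only [Nat.add_sub_cancel' hs.2.2.le]
  · intros
    rfl

end AddCommMonoid

theorem sum_quadruples_sub {F : ℤ → R} (hF : F.Even) (n : ℕ) :
    ∑ t ∈ quadruples n, F (t.1.1 - t.2.1) =
      ∑ t ∈ quadruples n with t.1.1 = t.2.1, F 0 +
        2 * ∑ t ∈ quadruples n with t.1.2 < t.2.2, F t.1.1 := by
  have hswap : ∑ t ∈ quadruples n with t.1.1 < t.2.1, F (t.1.1 - t.2.1) =
      ∑ t ∈ quadruples n with t.2.1 < t.1.1, F (t.1.1 - t.2.1) := by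
    rw [← sum_filter_quadruples_swap]
    exact sum_congr rfl fun t _ => by rw [← hF, neg_sub]; rfl
  have hdiag : ∑ t ∈ quadruples n with t.1.1 = t.2.1, F (t.1.1 - t.2.1) =
      ∑ t ∈ quadruples n with t.1.1 = t.2.1, F 0 :=
    sum_congr rfl fun t ht => by rw [(mem_filter.1 ht).2, sub_self]
  have hshift := sum_filter_quadruples_fst_gt n fun a b => F (a - b)
  simp only [Nat.cast_add, add_sub_cancel_right] at hshift
  rw [sum_eq_sum_lt_add_sum_eq_add_sum_gt _ (fun t => t.1.1) fun t => t.2.1, hswap, hdiag, hshift]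
  ring

theorem sum_quadruples_add (f : ℕ → R) (n : ℕ) :
    ∑ t ∈ quadruples n, f (t.1.1 + t.2.1) =
      ∑ t ∈ quadruples n with t.1.2 = t.2.2, f (t.1.1 + t.2.1) +
        2 * ∑ t ∈ quadruples n with t.2.1 < t.1.1, f t.1.1 := by
  have hswap : ∑ t ∈ quadruples n with t.2.2 < t.1.2, f (t.1.1 + t.2.1) =
      ∑ t ∈ quadruples n with t.1.2 < t.2.2, f (t.1.1 + t.2.1) := by
    rw [← sum_filter_quadruples_swap]
    exact sum_congr rfl fun t _ => by rw [add_comm]; rfl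
  rw [sum_eq_sum_lt_add_sum_eq_add_sum_gt _ (fun t => t.1.2) fun t => t.2.2, hswap,
    sum_filter_quadruples_fst_gt n fun a _ => f a]
  ring

theorem sum_filter_quadruples_snd_lt_sub (f : ℕ → R) (n : ℕ) :
    ∑ t ∈ quadruples n with t.1.2 < t.2.2, f t.1.1 -
        ∑ t ∈ quadruples n with t.2.1 < t.1.1, f t.1.1 =
      ∑ t ∈ quadruples n with t.1.1 = t.2.1, f t.1.1 -
        ∑ t ∈ quadruples n with t.1.2 = t.2.2, f t.1.1 := by
  have hlt : ∑ t ∈ quadruples n with t.2.2 < t.1.2, f t.1.1 =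
      ∑ t ∈ quadruples n with t.1.1 < t.2.1, f t.1.1 := calc
    _ = ∑ t ∈ quadruples n with t.1.2 < t.2.2, f t.2.1 :=
      (sum_filter_quadruples_swap n (fun t => t.2.2 < t.1.2) fun t => f t.1.1).symm
    _ = ∑ t ∈ quadruples n with t.2.1 < t.1.1, f t.2.1 :=
      (sum_filter_quadruples_fst_gt n fun _ b => f b).symm
    _ = _ := sum_filter_quadruples_swap n (fun t => t.1.1 < t.2.1) fun t => f t.1.1
  have hfst := sum_eq_sum_lt_add_sum_eq_add_sum_gt (quadruples n) (fun t => t.1.1)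
    (fun t => t.2.1) fun t => f t.1.1
  have hsnd := sum_eq_sum_lt_add_sum_eq_add_sum_gt (quadruples n) (fun t => t.1.2)
    (fun t => t.2.2) fun t => f t.1.1
  linear_combination hfst - hsnd - hlt

theorem liouville_identity {F : ℤ → R} (hF : F.Even) (n : ℕ) :
    ∑ t ∈ quadruples n, (F (t.1.1 - t.2.1) - F (t.1.1 + t.2.1)) =
      ∑ t ∈ quadruples n with t.1.1 = t.2.1, (F 0 + 2 * F t.1.1) -
        ∑ t ∈ quadruples n with t.1.2 = t.2.2, (F (t.1.1 + t.2.1) + 2 * F t.1.1) := by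
  have hadd := sum_quadruples_add (fun m => F m) n
  have hlt := sum_filter_quadruples_snd_lt_sub (fun m => F m) n
  simp only [Nat.cast_add] at hadd
  simp only [sum_sub_distrib, sum_add_distrib, ← mul_sum]
  linear_combination sum_quadruples_sub hF n - hadd + 2 * hlt

theorem quadraticChar_mul_quadraticChar_zmod_three (a b : ZMod 3) :
    quadraticChar (ZMod 3) a * quadraticChar (ZMod 3) b =
      (if a - b = 0 then 1 else 0) - (if a + b = 0 then 1 else 0) := by
  revert a b
  decide

theorem card_filter_dvd_Ioo (r d : ℕ) : #{c ∈ Ioo 0 d | r ∣ c} = (d - 1) / r := by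
  rw [← Nat.Ioc_filter_dvd_card_eq_div]
  rfl

theorem sum_quadruples_quadraticChar {n : ℕ} (hn : ¬ 3 ∣ n) :
    ∑ t ∈ quadruples n, quadraticChar (ZMod 3) t.1.1 * quadraticChar (ZMod 3) t.2.1 =
      ∑ t ∈ quadruples n with t.1.2 = t.2.2, (1 - 2 * if 3 ∣ t.1.1 then 1 else 0) := by
  set F : ℤ → ℤ := fun m => if (m : ZMod 3) = 0 then 1 else 0 with hF
  have hF_even : F.Even := fun m => by simp only [hF, Int.cast_neg, neg_eq_zero]
  have hF_zero : F 0 = 1 := by simp only [hF, Int.cast_zero, if_true]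
  have hF_natCast (m : ℕ) : F m = if 3 ∣ m then 1 else 0 := by
    simp only [hF, Int.cast_natCast, ZMod.natCast_eq_zero_iff]
  have hF_of_dvd {m : ℕ} (hm : m ∣ n) : F m = 0 := by
    rw [hF_natCast, if_neg fun h => hn (h.trans hm)]
  have hfst : ∑ t ∈ quadruples n with t.1.1 = t.2.1, (F 0 + 2 * F t.1.1) =
      ∑ t ∈ quadruples n with t.1.2 = t.2.2, 1 := by
    rw [← Nat.cast_one, ← Nat.cast_sum, ← card_eq_sum_ones, ← card_filter_quadruples_fst_eq,
      card_eq_sum_ones, Nat.cast_sum]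
    refine sum_congr rfl ?_
    rintro ⟨⟨a, x⟩, b, y⟩ ht
    obtain ⟨ht, rfl : a = b⟩ := mem_filter.1 ht
    have ha : a ∣ n := ⟨x + y, by rw [mul_add, (mem_quadruples.1 ht).2.2.2.2]⟩
    dsimp only
    rw [hF_zero, hF_of_dvd ha, mul_zero, add_zero, Nat.cast_one]
  have hsnd : ∀ t ∈ ({t ∈ quadruples n | t.1.2 = t.2.2} : Finset _), F (t.1.1 + t.2.1) = 0 := by
    rintro ⟨⟨a, x⟩, b, y⟩ ht
    obtain ⟨ht, rfl : x = y⟩ := mem_filter.1 ht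
    rw [← Nat.cast_add]
    exact hF_of_dvd ⟨x, by rw [add_mul, (mem_quadruples.1 ht).2.2.2.2]⟩
  have hliouville := liouville_identity hF_even n
  rw [hfst, sum_add_distrib, sum_eq_zero hsnd, zero_add, ← sum_sub_distrib] at hliouville
  simp only [hF_natCast] at hliouville
  rw [← hliouville]
  refine sum_congr rfl fun t _ => ?_
  simp only [quadraticChar_mul_quadraticChar_zmod_three, hF, Int.cast_sub, Int.cast_add,
    Int.cast_natCast]

theorem three_mul_sum_Ioo_one_sub_two_mul {d : ℕ} (hd : ¬ 3 ∣ d) :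
    3 * ∑ c ∈ Ioo 0 d, (1 - 2 * if 3 ∣ c then 1 else 0) = d - quadraticChar (ZMod 3) d := by
  rw [sum_sub_distrib, ← mul_sum, sum_boole, card_filter_dvd_Ioo, ← ZMod.natCast_mod d 3,
    sum_const, Nat.card_Ioo, nsmul_one]
  obtain h | h : d % 3 = 1 ∨ d % 3 = 2 := by omega
  · rw [h, show quadraticChar (ZMod 3) (1 : ℕ) = 1 by decide]
    omega
  · rw [h, show quadraticChar (ZMod 3) (2 : ℕ) = -1 by decide]
    omega

theorem three_mul_sum_divisorSum_mul_divisorSum {n : ℕ} (hn : ¬ 3 ∣ n) :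
    3 * ∑ ij ∈ antidiagonal n, divisorSum (quadraticChar (ZMod 3)) ij.1 *
        divisorSum (quadraticChar (ZMod 3)) ij.2 =
      ∑ d ∈ n.divisors, (d : ℤ) - divisorSum (quadraticChar (ZMod 3)) n := by
  rw [sum_antidiagonal_divisorSum_mul_divisorSum, sum_quadruples_quadraticChar hn,
    sum_filter_quadruples_snd_eq n fun c => 1 - 2 * if 3 ∣ c then 1 else 0, mul_sum, divisorSum,
    ← sum_sub_distrib]
  exact sum_congr rfl fun d hd => three_mul_sum_Ioo_one_sub_two_mul fun h =>
    hn (h.trans (Nat.dvd_of_mem_divisors hd))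

end Liouville

section SumOfDivisors

open ArithmeticFunction

theorem divisorSum_eq_zero_of_isQuadratic {R : Type*} [CommRing R] [NoZeroDivisors R] [CharZero R]
    {N : ℕ} {χ : DirichletCharacter R N} (hχ : χ.IsQuadratic) {n : ℕ} (hn : χ n = -1) :
    divisorSum χ n = 0 := by
  have hneg : ∀ d ∈ n.divisors, χ (n / d : ℕ) = -χ d := by
    intro d hd
    have hmul : χ d * χ (n / d : ℕ) = -1 := by
      rw [← map_mul, ← Nat.cast_mul, Nat.mul_div_cancel' (Nat.dvd_of_mem_divisors hd), hn]
    obtain h | h | h := hχ d <;> rw [h] at hmul ⊢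
    · exact absurd hmul (by simp)
    · rwa [one_mul] at hmul
    · linear_combination -hmul
  refine self_eq_neg.1 ?_
  rw [divisorSum, ← sum_neg_distrib, ← sum_congr rfl hneg]
  exact (Nat.sum_div_divisors n fun d => χ d).symm

theorem divisorSum_quadraticChar_zmod_three_eq_zero {n : ℕ} (hn : n % 3 = 2) :
    divisorSum (quadraticChar (ZMod 3)) n = 0 := by
  refine divisorSum_eq_zero_of_isQuadratic (quadraticChar_isQuadratic _) ?_
  rw [← ZMod.natCast_mod n 3, hn]
  decide

theorem A3_eq_sum_divisorSum (n : ℕ) :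
    (A3 n : ℤ) = ∑ ij ∈ antidiagonal (3 * n + 2), divisorSum (quadraticChar (ZMod 3)) ij.1 *
      divisorSum (quadraticChar (ZMod 3)) ij.2 := by
  rw [A3_eq_sum_a3]
  push_cast
  refine sum_of_injOn (fun ij => (3 * ij.1 + 1, 3 * ij.2 + 1)) ?_ ?_ ?_ ?_
  · intro ij _ kl _ h
    simp only [Prod.mk.injEq] at h
    exact Prod.ext (by omega) (by omega)
  · intro ij hij
    rw [mem_coe, HasAntidiagonal.mem_antidiagonal] at hij ⊢
    dsimp only
    omega
  · intro ij hij hnot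
    rw [HasAntidiagonal.mem_antidiagonal] at hij
    have hmod : ij.1 % 3 = 2 ∨ ij.2 % 3 = 2 := by
      by_contra! hne
      refine hnot ⟨(ij.1 / 3, ij.2 / 3), ?_, Prod.ext ?_ ?_⟩
      · rw [mem_coe, HasAntidiagonal.mem_antidiagonal]
        dsimp only
        omega
      all_goals dsimp only; omega
    obtain h | h := hmod
    · rw [divisorSum_quadraticChar_zmod_three_eq_zero h, zero_mul]
    · rw [divisorSum_quadraticChar_zmod_three_eq_zero h, mul_zero]
  · intro ij _
    rw [a3_eq_divisorSum, a3_eq_divisorSum]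

theorem three_mul_A3 (n : ℕ) : 3 * A3 n = sigma 1 (3 * n + 2) := by
  zify
  rw [A3_eq_sum_divisorSum, three_mul_sum_divisorSum_mul_divisorSum (by omega),
    divisorSum_quadraticChar_zmod_three_eq_zero (by omega), sub_zero, sigma_one_apply,
    Nat.cast_sum]

theorem sub_one_mul_sigma_one_prime_pow_mul {p m : ℕ} (hp : p.Prime) (hm : ¬ p ∣ m) (a : ℕ) :
    ((p : ℤ) - 1) * sigma 1 (p ^ a * m) = ((p : ℤ) ^ (a + 1) - 1) * sigma 1 m := by
  have hcoprime : (p ^ a).Coprime m := (hp.coprime_iff_not_dvd.2 hm).pow_left a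
  rw [isMultiplicative_sigma.map_mul_of_coprime hcoprime, sigma_one_apply_prime_pow hp]
  push_cast
  rw [← mul_assoc, mul_geom_sum]

theorem sigma_one_prime_pow_mul_recurrence {p n : ℕ} (hp : p.Prime) (hn : n ≠ 0) (k : ℕ) :
    ((p : ℤ) - 1) * sigma 1 (p ^ k * n) + ((p : ℤ) ^ k - p) * sigma 1 n =
      ((p : ℤ) ^ k - 1) * sigma 1 (p * n) := by
  obtain ⟨a, m, hm, rfl⟩ := Nat.exists_eq_pow_mul_and_not_dvd hn p hp.ne_one
  have hpow := sub_one_mul_sigma_one_prime_pow_mul hp hm (k + a)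
  have hself := sub_one_mul_sigma_one_prime_pow_mul hp hm a
  have hmul := sub_one_mul_sigma_one_prime_pow_mul hp hm (a + 1)
  rw [← mul_assoc, ← mul_assoc, ← pow_add, ← pow_succ']
  have hp_sub_one : (p : ℤ) - 1 ≠ 0 := sub_ne_zero.2 (mod_cast hp.ne_one)
  apply mul_left_cancel₀ hp_sub_one
  linear_combination ((p : ℤ) - 1) * hpow + ((p : ℤ) ^ k - p) * hself - ((p : ℤ) ^ k - 1) * hmul

end SumOfDivisors

end ThreeCore

/-- For a prime p ≡ 1 (mod 3) and k, n ≥ 0: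
(p−1)·A₃(pᵏn + (2pᵏ−2)/3) + (pᵏ−p)·A₃(n) = (pᵏ−1)·A₃(pn + (2p−2)/3). -/
theorem A3_rec_one_mod_three (p k n : ℕ) (hp : p.Prime) (hp3 : p % 3 = 1) :
    ((p : ℤ) - 1) * A3 (p ^ k * n + (2 * p ^ k - 2) / 3) +
      ((p : ℤ) ^ k - p) * A3 n =
    ((p : ℤ) ^ k - 1) * A3 (p * n + (2 * p - 2) / 3) := by
  have three_mul_A3_mul {q : ℕ} (hq : q % 3 = 1) :
      3 * A3 (q * n + (2 * q - 2) / 3) = ArithmeticFunction.sigma 1 (q * (3 * n + 2)) := by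
    have harg : 3 * (q * n + (2 * q - 2) / 3) + 2 = q * (3 * n + 2) := by
      have hdiv : 3 * ((2 * q - 2) / 3) + 2 = 2 * q := by omega
      linear_combination hdiv
    rw [ThreeCore.three_mul_A3, harg]
  have hpow_mod : p ^ k % 3 = 1 := by simp [Nat.pow_mod, hp3]
  have hrec := ThreeCore.sigma_one_prime_pow_mul_recurrence hp (n := 3 * n + 2) (by omega) k
  rw [← three_mul_A3_mul hpow_mod, ← three_mul_A3_mul hp3, ← ThreeCore.three_mul_A3] at hrec
  push_cast at hrec
  linarith
end

section
/- Let p be a prime with p ≡ 2 (mod 3), and let k, n be nonnegative integers. Then (p²−1)·A_3(p^{2k}·n + (2p^{2k} − 2)/3) + (p^{2k} − p²)·A_3(n) = (p^{2k} − 1)·A_3(p²·n + (2p² − 2)/3). (Here (2p^{2k} − 2)/3 and (2p² − 2)/3 are integers since p² ≡ 1 (mod 3).) -/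
/-!
The theorem follows from `3 * A3 n = σ (3 * n + 2)`. Since `p ^ 2 ≡ 1` modulo `3`, the map
`n ↦ 3 * n + 2` sends the three arguments of `A3` to `p ^ (2 * k) * N`, `N` and `p ^ 2 * N` with
`N = 3 * n + 2`, and for `N = p ^ a * m` with `p ∤ m` all three values are determined by
`(p - 1) * σ (p ^ a * m) = (p ^ (a + 1) - 1) * σ m`.

For the formula itself, reading a `3`-core on an abacus with three runners identifies it with a
pair of natural numbers, and completing the square turns these pairs into Eisenstein integers of
norm `3 * n + 1` up to units. Counting the latter, by unique factorization, gives
`a3 n = ∑ d ∣ 3 * n + 1, χ₃ d`. The convolution of this divisor sum with itself is a sum over the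
decompositions `3 * n + 2 = a * x + b * y`; Liouville's substitutions
`a * x + b * y = (a - b) * x + b * (x + y)` show that its off-diagonal part `a ≠ b` vanishes, and
the diagonal part is `σ (3 * n + 2) / 3`.
-/

open Finset

theorem sum_divisors_prime_pow_mul {R : Type*} [CommSemiring R] (f : ℕ →* R) {p m : ℕ}
    (hp : p.Prime) (hpm : ¬p ∣ m) (a : ℕ) :
    ∑ d ∈ (p ^ a * m).divisors, f d =
      (∑ i ∈ range (a + 1), f p ^ i) * ∑ d ∈ m.divisors, f d := by
  have hcop : (p ^ a).Coprime m := ((hp.coprime_iff_not_dvd).2 hpm).pow_left a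
  rw [Nat.divisors_mul, ← image_mul_product, sum_image (by simpa using hcop.mul_injOn_divisors),
    sum_product, Nat.sum_divisors_prime_pow hp]
  simp only [map_mul, map_pow, sum_mul_sum]

theorem sub_one_mul_sum_divisors_prime_pow_mul {p m : ℕ} (hp : p.Prime) (hpm : ¬p ∣ m) (a : ℕ) :
    ((p : ℤ) - 1) * (∑ d ∈ (p ^ a * m).divisors, d : ℕ) =
      ((p : ℤ) ^ (a + 1) - 1) * (∑ d ∈ m.divisors, d : ℕ) := by
  rw [← mul_geom_sum]
  push_cast
  rw [mul_assoc]
  congr 1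
  simpa using sum_divisors_prime_pow_mul (Nat.castRingHom ℤ : ℕ →* ℤ) hp hpm a

/-- The nontrivial Dirichlet character modulo `3`, the quadratic character of `ℚ(√-3)`. -/
abbrev χ₃ : MulChar (ZMod 3) ℤ := quadraticChar (ZMod 3)

theorem χ₃_natCast_eq_zero {n : ℕ} (hn : n % 3 = 0) : χ₃ n = 0 := by
  rw [← ZMod.natCast_mod n 3, hn]
  rfl

theorem χ₃_natCast_eq_one {n : ℕ} (hn : n % 3 = 1) : χ₃ n = 1 := by
  rw [← ZMod.natCast_mod n 3, hn]
  rfl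

theorem χ₃_natCast_eq_neg_one {n : ℕ} (hn : n % 3 = 2) : χ₃ n = -1 := by
  rw [← ZMod.natCast_mod n 3, hn]
  rfl

theorem two_mul_abs_bmod_le (x : ℤ) {n : ℕ} (hn : 0 < n) : 2 * |x.bmod n| ≤ n := by
  have hlower := Int.le_bmod (x := x) hn
  have hupper := Int.bmod_le (x := x) hn
  rcases abs_cases (x.bmod n) with h | h <;> omega

/-- The Eisenstein integers `ℤ[ω]`, where `ω² = -1 - ω`. -/
abbrev EisensteinInt : Type := QuadraticAlgebra ℤ (-1) (-1)

namespace EisensteinInt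

open QuadraticAlgebra

theorem norm_eq (z : EisensteinInt) : z.norm = z.re ^ 2 - z.re * z.im + z.im ^ 2 := by
  rw [norm_def]
  ring

theorem four_mul_norm (z : EisensteinInt) :
    4 * z.norm = (2 * z.re - z.im) ^ 2 + 3 * z.im ^ 2 := by
  rw [norm_eq]
  ring

theorem three_mul_im_sq_le (z : EisensteinInt) : 3 * z.im ^ 2 ≤ 4 * z.norm := by
  nlinarith [four_mul_norm z, sq_nonneg (2 * z.re - z.im)]

theorem three_mul_re_sq_le (z : EisensteinInt) : 3 * z.re ^ 2 ≤ 4 * z.norm := by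
  nlinarith [four_mul_norm z, sq_nonneg (2 * z.im - z.re)]

theorem norm_nonneg (z : EisensteinInt) : 0 ≤ z.norm := by
  nlinarith [three_mul_im_sq_le z, sq_nonneg z.im]

theorem norm_eq_zero {z : EisensteinInt} : z.norm = 0 ↔ z = 0 := by
  refine ⟨fun hz => ?_, fun hz => by rw [hz, QuadraticAlgebra.norm_zero]⟩
  have him : z.im = 0 := by nlinarith [three_mul_im_sq_le z]
  have hre : z.re = 0 := by nlinarith [three_mul_re_sq_le z]
  exact QuadraticAlgebra.ext hre him

theorem norm_pos {z : EisensteinInt} (hz : z ≠ 0) : 0 < z.norm :=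
  (norm_nonneg z).lt_of_ne' (mt norm_eq_zero.1 hz)

/-- The quotient of `x` by `y`, obtained by rounding both coordinates of `x / y = x ȳ / N(y)`. -/
def roundDiv (x y : EisensteinInt) : EisensteinInt :=
  ⟨(x * star y).re.bdiv y.norm.natAbs, (x * star y).im.bdiv y.norm.natAbs⟩

theorem norm_lt_sq_of_two_mul_abs_le {z : EisensteinInt} {n : ℤ} (hn : 0 < n)
    (hre : 2 * |z.re| ≤ n) (him : 2 * |z.im| ≤ n) : z.norm < n ^ 2 := by
  have hprod : |z.re * z.im| ≤ |z.re| * |z.im| := (abs_mul _ _).le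
  have hneg := neg_abs_le (z.re * z.im)
  rw [norm_eq, ← sq_abs z.re, ← sq_abs z.im]
  nlinarith [abs_nonneg z.re, abs_nonneg z.im]

theorem norm_sub_mul_roundDiv_lt (x : EisensteinInt) {y : EisensteinInt} (hy : y ≠ 0) :
    (x - y * roundDiv x y).norm < y.norm := by
  have hpos := norm_pos hy
  have hcast : (y.norm.natAbs : ℤ) = y.norm := Int.natAbs_of_nonneg hpos.le
  have hround (a : ℤ) : 2 * |a.bmod y.norm.natAbs| ≤ y.norm := by
    simpa only [hcast] using two_mul_abs_bmod_le a (Int.natAbs_pos.2 hpos.ne')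
  have hrem : (x - y * roundDiv x y) * star y =
      ⟨(x * star y).re.bmod y.norm.natAbs, (x * star y).im.bmod y.norm.natAbs⟩ := by
    rw [sub_mul, mul_right_comm, ← algebraMap_norm_eq_mul_star]
    ext
    · simp [Int.bmod_eq_self_sub_mul_bdiv, hcast, roundDiv]
    · simp [Int.bmod_eq_self_sub_mul_bdiv, hcast, roundDiv]
  have hlt : (x - y * roundDiv x y).norm * y.norm < y.norm ^ 2 := by
    rw [← QuadraticAlgebra.norm_star y, ← map_mul, hrem, QuadraticAlgebra.norm_star]
    exact norm_lt_sq_of_two_mul_abs_le hpos (hround _) (hround _)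
  nlinarith

theorem norm_le_norm_mul (x : EisensteinInt) {y : EisensteinInt} (hy : y ≠ 0) :
    x.norm ≤ (x * y).norm := by
  rw [map_mul]
  exact le_mul_of_one_le_right (norm_nonneg x) (norm_pos hy)

noncomputable instance : EuclideanDomain EisensteinInt where
  quotient := roundDiv
  remainder x y := x - y * roundDiv x y
  quotient_zero x := by ext <;> simp [roundDiv, Int.bdiv]
  quotient_mul_add_remainder_eq _ _ := add_sub_cancel _ _
  r := InvImage (· < ·) fun z => z.norm.toNat
  r_wellFounded := InvImage.wf _ wellFounded_lt
  remainder_lt x _ hy := (Int.toNat_lt_toNat (norm_pos hy)).2 (norm_sub_mul_roundDiv_lt x hy)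
  mul_left_not_lt x _ hy := not_lt_of_ge <| Int.toNat_le_toNat (norm_le_norm_mul x hy)

theorem isUnit_iff_norm_eq_one {z : EisensteinInt} : IsUnit z ↔ z.norm = 1 := by
  rw [isUnit_iff_norm_isUnit, Int.isUnit_iff]
  have := norm_nonneg z
  omega

theorem prime_of_norm_eq {q : EisensteinInt} {p : ℕ} (hp : p.Prime) (hq : q.norm = p) :
    Prime q := by
  have hpZ : Prime q.norm := hq ▸ Nat.prime_iff_prime_int.1 hp
  refine irreducible_iff_prime.1 ⟨fun h => hpZ.not_isUnit (isUnit_iff_norm_isUnit.1 h), ?_⟩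
  intro x y hxy
  rw [isUnit_iff_norm_isUnit, isUnit_iff_norm_isUnit]
  exact hpZ.irreducible.isUnit_or_isUnit (by rw [hxy, map_mul])

theorem exists_norm_eq_of_not_irreducible {p : ℕ} (hp : p.Prime)
    (hirr : ¬Irreducible (p : EisensteinInt)) : ∃ z : EisensteinInt, z.norm = p := by
  have hunit : ¬IsUnit (p : EisensteinInt) := by
    rw [isUnit_iff_norm_eq_one, QuadraticAlgebra.norm_natCast]
    exact_mod_cast (Nat.one_lt_pow two_ne_zero hp.one_lt).ne'
  obtain ⟨x, y, hxy, hx, hy⟩ : ∃ x y : EisensteinInt, (p : EisensteinInt) = x * y ∧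
      ¬IsUnit x ∧ ¬IsUnit y := by
    simpa [irreducible_iff, hunit] using hirr
  rw [isUnit_iff_norm_eq_one] at hx hy
  have hnorm : x.norm.natAbs * y.norm.natAbs = p ^ 2 := by
    rw [← Int.natAbs_mul, ← map_mul, ← hxy, QuadraticAlgebra.norm_natCast]
    simp
  have hx' := ((hp.mul_eq_prime_sq_iff (by have := norm_nonneg x; omega)
    (by have := norm_nonneg y; omega)).1 hnorm).1
  exact ⟨x, by rw [← hx', Int.natAbs_of_nonneg (norm_nonneg x)]⟩

theorem norm_emod_three_ne_two (z : EisensteinInt) : z.norm % 3 ≠ 2 := by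
  have hsq : z.norm = (z.re + z.im) ^ 2 - 3 * (z.re * z.im) := by rw [norm_eq]; ring
  have hmod : (z.re + z.im) ^ 2 % 3 ≠ 2 := by
    have hcases : (z.re + z.im) % 3 = 0 ∨ (z.re + z.im) % 3 = 1 ∨ (z.re + z.im) % 3 = 2 := by omega
    rcases hcases with h | h | h <;>
      simp [pow_two, Int.mul_emod, h]
  omega

theorem prime_natCast_of_mod_three_eq_two {p : ℕ} (hp : p.Prime) (hp3 : p % 3 = 2) :
    Prime (p : EisensteinInt) := by
  refine irreducible_iff_prime.1 (by_contra fun hirr => ?_)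
  obtain ⟨z, hz⟩ := exists_norm_eq_of_not_irreducible hp hirr
  have := norm_emod_three_ne_two z
  omega

theorem exists_sq_add_self_add_one_eq_zero {p : ℕ} [Fact p.Prime] (hp3 : p % 3 = 1) :
    ∃ t : ZMod p, t ^ 2 + t + 1 = 0 := by
  have hcard : 3 ∣ Nat.card (ZMod p)ˣ := by
    rw [Nat.card_eq_fintype_card, ZMod.card_units]
    omega
  obtain ⟨u, hu⟩ := exists_prime_orderOf_dvd_card' 3 hcard
  refine ⟨u, (mul_eq_zero.1 ?_).resolve_left (sub_ne_zero.2 ?_ : (u : ZMod p) - 1 ≠ 0)⟩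
  · have hcube : (u : ZMod p) ^ 3 = 1 := by
      rw [← Units.val_pow_eq_pow_val, ← hu, pow_orderOf_eq_one, Units.val_one]
    linear_combination hcube
  · rintro h
    simp [Units.val_eq_one.1 h] at hu

theorem natCast_dvd_iff {n : ℕ} {z : EisensteinInt} :
    (n : EisensteinInt) ∣ z ↔ (n : ℤ) ∣ z.re ∧ (n : ℤ) ∣ z.im := by
  simpa using algebraMap_dvd_iff (r := (n : ℤ)) (z := z)

theorem exists_norm_eq_of_mod_three_eq_one {p : ℕ} (hp : p.Prime) (hp3 : p % 3 = 1) :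
    ∃ z : EisensteinInt, z.norm = p := by
  have := Fact.mk hp
  obtain ⟨t, ht⟩ := exists_sq_add_self_add_one_eq_zero hp3
  obtain ⟨t, rfl⟩ := ZMod.intCast_surjective t
  have hdvd : (p : ℤ) ∣ t ^ 2 + t + 1 := by
    rw [← ZMod.intCast_zmod_eq_zero_iff_dvd]
    exact_mod_cast ht
  refine exists_norm_eq_of_not_irreducible hp fun hirr => ?_
  have hmul : (p : EisensteinInt) ∣ ⟨t, -1⟩ * star ⟨t, -1⟩ := by
    rw [← algebraMap_norm_eq_mul_star, natCast_dvd_iff, algebraMap_re, algebraMap_im, norm_eq]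
    simpa using hdvd
  have hnot : ¬(p : ℤ) ∣ 1 := by exact_mod_cast hp.not_dvd_one
  rcases (irreducible_iff_prime.1 hirr).dvd_or_dvd hmul with h | h <;>
    simp [natCast_dvd_iff, hnot] at h

/-- The Eisenstein integers of norm `m`. -/
def normFiber (m : ℕ) : Set EisensteinInt := {z | z.norm = m}

theorem mem_normFiber {m : ℕ} {z : EisensteinInt} : z ∈ normFiber m ↔ z.norm = m := Iff.rfl

theorem finite_normFiber (m : ℕ) : (normFiber m).Finite := by
  refine (((Set.finite_Icc (-2 * m : ℤ) (2 * m)).prod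
    (Set.finite_Icc (-2 * m : ℤ) (2 * m))).preimage
    (QuadraticAlgebra.equivProd _ _).injective.injOn).subset fun z hz => ?_
  have hre := three_mul_re_sq_le z
  have him := three_mul_im_sq_le z
  rw [mem_normFiber.1 hz] at hre him
  change (-2 * m ≤ z.re ∧ z.re ≤ 2 * m) ∧ -2 * m ≤ z.im ∧ z.im ≤ 2 * m
  refine ⟨⟨?_, ?_⟩, ?_, ?_⟩ <;> nlinarith

theorem normFiber_one : normFiber 1 =
    ({⟨1, 0⟩, ⟨-1, 0⟩, ⟨0, 1⟩, ⟨0, -1⟩, ⟨1, 1⟩, ⟨-1, -1⟩} : Finset EisensteinInt) := by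
  ext ⟨x, y⟩
  constructor
  · intro hz
    have hnorm : x ^ 2 - x * y + y ^ 2 = 1 := by rw [← norm_eq ⟨x, y⟩]; exact_mod_cast hz
    have hx : -1 ≤ x ∧ x ≤ 1 := by constructor <;> nlinarith [sq_nonneg (2 * y - x)]
    have hy : -1 ≤ y ∧ y ≤ 1 := by constructor <;> nlinarith [sq_nonneg (2 * x - y)]
    obtain ⟨⟨_, _⟩, _, _⟩ := And.intro hx hy
    interval_cases x <;> interval_cases y <;> simp_all
  · simp only [coe_insert, coe_singleton, Set.mem_insert_iff, Set.mem_singleton_iff]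
    rintro (h | h | h | h | h | h) <;> rw [h] <;> rfl

theorem ncard_normFiber_one : (normFiber 1).ncard = 6 := by
  rw [normFiber_one, Set.ncard_coe_finset]
  rfl

theorem dvd_or_star_dvd_of_dvd_norm {q z : EisensteinInt} (hq : Prime q)
    (h : q ∣ algebraMap ℤ EisensteinInt z.norm) : q ∣ z ∨ star q ∣ z := by
  rw [algebraMap_norm_eq_mul_star] at h
  refine (hq.dvd_or_dvd h).imp_right fun hstar => ?_
  simpa [starRingEnd_apply] using map_dvd (starRingEnd EisensteinInt) hstar

theorem not_dvd_star_of_norm_eq {q : EisensteinInt} {p : ℕ} (hp : p.Prime) (hp3 : p ≠ 3)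
    (hq : q.norm = p) : ¬q ∣ star q := by
  intro h
  have hpZ := Nat.prime_iff_prime_int.1 hp
  have hdvd : (p : ℤ) ∣ 3 * q.im ^ 2 := by
    have hnorm : (q - star q).norm = 3 * q.im ^ 2 := by
      rw [norm_eq]
      simp only [re_sub, im_sub, re_star, im_star]
      ring
    rw [← hnorm, ← hq]
    exact map_dvd QuadraticAlgebra.norm (dvd_sub_self_left.2 h)
  have him : (p : ℤ) ∣ q.im :=
    hpZ.dvd_of_dvd_pow ((hpZ.dvd_or_dvd hdvd).resolve_left fun h3 =>
      hp3 ((Nat.prime_dvd_prime_iff_eq hp Nat.prime_three).1 (by exact_mod_cast h3)))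
  have hre : (p : ℤ) ∣ q.re := by
    refine hpZ.dvd_of_dvd_pow (n := 2) ?_
    have hsq : q.re ^ 2 = p + (q.re - q.im) * q.im := by rw [← hq, norm_eq]; ring
    exact hsq ▸ dvd_add dvd_rfl (him.mul_left _)
  have hsq : (p : ℤ) ^ 2 ∣ p := by
    have := map_dvd QuadraticAlgebra.norm (natCast_dvd_iff.2 ⟨hre, him⟩)
    rwa [QuadraticAlgebra.norm_natCast, hq] at this
  exact hpZ.not_isUnit (isUnit_iff_dvd_one.2
    (Int.dvd_of_mul_dvd_mul_left hpZ.ne_zero (by simpa [sq] using hsq)))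

theorem ncard_normFiber_sep_dvd {q : EisensteinInt} {c : ℕ} (hc : c ≠ 0) (hq : q.norm = c)
    (m : ℕ) : {z ∈ normFiber (c * m) | q ∣ z}.ncard = (normFiber m).ncard := by
  have hq0 : q ≠ 0 := by
    rintro rfl
    rw [QuadraticAlgebra.norm_zero] at hq
    exact hc (by exact_mod_cast hq.symm)
  have himage : {z ∈ normFiber (c * m) | q ∣ z} = (q * ·) '' normFiber m := by
    ext z
    constructor
    · rintro ⟨hz, w, rfl⟩
      refine ⟨w, ?_, rfl⟩
      have : (c : ℤ) * w.norm = c * m := by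
        rw [← hq, ← map_mul, hz, hq, Nat.cast_mul]
      exact mul_left_cancel₀ (by exact_mod_cast hc) this
    · rintro ⟨w, hw, rfl⟩
      refine ⟨?_, dvd_mul_right _ _⟩
      simp_all [normFiber]
  rw [himage, Set.ncard_image_of_injective _ (mul_right_injective₀ hq0)]

theorem dvd_or_star_dvd_of_mem_normFiber {q z : EisensteinInt} {p m : ℕ} (hp : p.Prime)
    (hq : q.norm = p) (hz : z ∈ normFiber (p * m)) : q ∣ z ∨ star q ∣ z := by
  refine dvd_or_star_dvd_of_dvd_norm (prime_of_norm_eq hp hq) ?_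
  rw [mem_normFiber.1 hz, Nat.cast_mul, map_mul, ← hq, algebraMap_norm_eq_mul_star, mul_assoc]
  exact dvd_mul_right _ _

theorem dvd_and_star_dvd_iff {q z : EisensteinInt} {p : ℕ} (hp : p.Prime) (hp3 : p ≠ 3)
    (hq : q.norm = p) : q ∣ z ∧ star q ∣ z ↔ (p : EisensteinInt) ∣ z := by
  have hmul : q * star q = p := by
    rw [← algebraMap_norm_eq_mul_star, hq]
    simp
  refine ⟨?_, fun h => ⟨?_, ?_⟩⟩
  · rintro ⟨hz, w, rfl⟩
    rw [← hmul, mul_comm q]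
    exact mul_dvd_mul_left _
      (((prime_of_norm_eq hp hq).dvd_or_dvd hz).resolve_left (not_dvd_star_of_norm_eq hp hp3 hq))
  · exact (hmul ▸ dvd_mul_right q (star q)).trans h
  · exact (hmul ▸ dvd_mul_left (star q) q).trans h

theorem ncard_normFiber_prime_mul_of_mod_three_eq_one {p : ℕ} (hp : p.Prime) (hp3 : p % 3 = 1)
    (m : ℕ) : (normFiber (p * m)).ncard +
      {z ∈ normFiber (p * m) | (p : EisensteinInt) ∣ z}.ncard = 2 * (normFiber m).ncard := by
  obtain ⟨q, hq⟩ := exists_norm_eq_of_mod_three_eq_one hp hp3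
  have hunion : {z ∈ normFiber (p * m) | q ∣ z} ∪ {z ∈ normFiber (p * m) | star q ∣ z} =
      normFiber (p * m) :=
    subset_antisymm (Set.union_subset (Set.sep_subset _ _) (Set.sep_subset _ _))
      fun z hz => (dvd_or_star_dvd_of_mem_normFiber hp hq hz).imp (⟨hz, ·⟩) (⟨hz, ·⟩)
  have hinter : {z ∈ normFiber (p * m) | q ∣ z} ∩ {z ∈ normFiber (p * m) | star q ∣ z} =
      {z ∈ normFiber (p * m) | (p : EisensteinInt) ∣ z} := by
    simp only [← dvd_and_star_dvd_iff hp (by rintro rfl; simp at hp3) hq, Set.sep_and]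
  have hfin (w : EisensteinInt) : {z ∈ normFiber (p * m) | w ∣ z}.Finite :=
    (finite_normFiber _).subset (Set.sep_subset _ _)
  have hcard := Set.ncard_union_add_ncard_inter _ _ (hfin q) (hfin (star q))
  rw [hunion, hinter, ncard_normFiber_sep_dvd (q := q) hp.ne_zero hq,
    ncard_normFiber_sep_dvd (q := star q) hp.ne_zero
      (by rw [QuadraticAlgebra.norm_star, hq])] at hcard
  rw [hcard, two_mul]

theorem sep_dvd_normFiber_prime_mul_of_mod_three_eq_two {p : ℕ} (hp : p.Prime) (hp3 : p % 3 = 2)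
    (m : ℕ) : {z ∈ normFiber (p * m) | (p : EisensteinInt) ∣ z} = normFiber (p * m) := by
  refine Set.sep_eq_self_iff_mem_true.2 fun z hz => ?_
  have hdvd : (p : EisensteinInt) ∣ algebraMap ℤ EisensteinInt z.norm := by
    rw [mem_normFiber.1 hz]
    simp
  simpa using dvd_or_star_dvd_of_dvd_norm (prime_natCast_of_mod_three_eq_two hp hp3) hdvd

theorem ncard_normFiber_three_mul (m : ℕ) : (normFiber (3 * m)).ncard = (normFiber m).ncard := by
  have hq : (⟨1, -1⟩ : EisensteinInt).norm = (3 : ℕ) := rfl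
  rw [← ncard_normFiber_sep_dvd three_ne_zero hq m]
  congr 1
  refine (Set.sep_eq_self_iff_mem_true.2 fun z hz => ?_).symm
  have hstar : (⟨1, -1⟩ : EisensteinInt) ∣ star ⟨1, -1⟩ := ⟨⟨1, 1⟩, rfl⟩
  exact (dvd_or_star_dvd_of_mem_normFiber Nat.prime_three hq hz).elim id hstar.trans

theorem ncard_normFiber_prime_mul {p : ℕ} (hp : p.Prime) (m : ℕ) :
    ((normFiber (p * m)).ncard : ℤ) +
      χ₃ p * {z ∈ normFiber (p * m) | (p : EisensteinInt) ∣ z}.ncard =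
        (1 + χ₃ p) * (normFiber m).ncard := by
  obtain hp3 | hp3 | hp3 : p % 3 = 0 ∨ p % 3 = 1 ∨ p % 3 = 2 := by omega
  · obtain rfl := (Nat.prime_dvd_prime_iff_eq Nat.prime_three hp).1 (Nat.dvd_of_mod_eq_zero hp3)
    rw [χ₃_natCast_eq_zero hp3, ncard_normFiber_three_mul]
    ring
  · rw [χ₃_natCast_eq_one hp3]
    exact_mod_cast (by simpa using ncard_normFiber_prime_mul_of_mod_three_eq_one hp hp3 m)
  · rw [χ₃_natCast_eq_neg_one hp3, sep_dvd_normFiber_prime_mul_of_mod_three_eq_two hp hp3]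
    ring

theorem ncard_normFiber_prime_mul_of_not_dvd {p m : ℕ} (hp : p.Prime) (hpm : ¬p ∣ m) :
    ((normFiber (p * m)).ncard : ℤ) = (1 + χ₃ p) * (normFiber m).ncard := by
  have hempty : {z ∈ normFiber (p * m) | (p : EisensteinInt) ∣ z} = ∅ := by
    refine Set.sep_eq_empty_iff_mem_false.2 fun z hz hdvd => hpm ?_
    have hsq := map_dvd QuadraticAlgebra.norm hdvd
    rw [QuadraticAlgebra.norm_natCast, mem_normFiber.1 hz, sq] at hsq
    exact Nat.dvd_of_mul_dvd_mul_left hp.pos (by exact_mod_cast hsq)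
  rw [← ncard_normFiber_prime_mul hp, hempty]
  simp

theorem ncard_normFiber_prime_mul_prime_mul {p : ℕ} (hp : p.Prime) (m : ℕ) :
    ((normFiber (p * (p * m))).ncard : ℤ) + χ₃ p * (normFiber m).ncard =
      (1 + χ₃ p) * (normFiber (p * m)).ncard := by
  rw [← ncard_normFiber_prime_mul hp, ← mul_assoc,
    ncard_normFiber_sep_dvd (mul_ne_zero hp.ne_zero hp.ne_zero)
      (by rw [QuadraticAlgebra.norm_natCast, Nat.cast_mul, sq])]

theorem ncard_normFiber_prime_pow_mul {p m : ℕ} (hp : p.Prime) (hpm : ¬p ∣ m) (a : ℕ) :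
    ((normFiber (p ^ a * m)).ncard : ℤ) =
      (∑ i ∈ range (a + 1), χ₃ p ^ i) * (normFiber m).ncard := by
  induction a using Nat.twoStepInduction with
  | zero => simp
  | one => simpa [sum_range_succ] using ncard_normFiber_prime_mul_of_not_dvd hp hpm
  | more a ih ih' =>
    have hrec := ncard_normFiber_prime_mul_prime_mul hp (p ^ a * m)
    simp only [← mul_assoc, ← pow_succ'] at hrec
    rw [ih, ih'] at hrec
    simp only [sum_range_succ _ (a + 1), sum_range_succ _ (a + 2)] at hrec ⊢
    linear_combination hrec

theorem ncard_normFiber {n : ℕ} (hn : n ≠ 0) :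
    ((normFiber n).ncard : ℤ) = 6 * ∑ d ∈ n.divisors, χ₃ d := by
  induction n using Nat.recOnPrimePow with
  | zero => exact absurd rfl hn
  | one => simp [ncard_normFiber_one]
  | prime_pow_mul m p a hp hpm _ ih =>
    have hsum : ∑ d ∈ (p ^ a * m).divisors, χ₃ d =
        (∑ i ∈ range (a + 1), χ₃ p ^ i) * ∑ d ∈ m.divisors, χ₃ d :=
      sum_divisors_prime_pow_mul
        (χ₃.toMonoidHom.comp (Nat.castRingHom (ZMod 3) : ℕ →* ZMod 3)) hp hpm a
    rw [ncard_normFiber_prime_pow_mul hp hpm, ih (by rintro rfl; simp at hpm), hsum]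
    ring

end EisensteinInt

/-- The pairs `(a, b)` that parametrize the `3`-cores of size `n = a ^ 2 + b ^ 2 + b - a * b`:
`a` and `b` count the beads on the runners `1` and `2` of the abacus. -/
def coreParams (n : ℕ) : Set (ℕ × ℕ) := {q | q.1 ^ 2 + q.2 ^ 2 + q.2 = n + q.1 * q.2}

namespace EisensteinInt

open QuadraticAlgebra

/-- The Eisenstein integer attached to the abacus data `(a, b)`. It completes the square: its norm
is `3 * (a ^ 2 + b ^ 2 + b - a * b) + 1`. -/
def ofCoreParams (q : ℕ × ℕ) : EisensteinInt := ⟨1 + q.1 + q.2, 2 * q.1 - q.2⟩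

theorem ofCoreParams_injective : Function.Injective ofCoreParams := by
  rintro ⟨a, b⟩ ⟨c, d⟩ h
  simp only [ofCoreParams, QuadraticAlgebra.mk.injEq] at h
  ext <;> grind

theorem mem_range_ofCoreParams {z : EisensteinInt} :
    z ∈ Set.range ofCoreParams ↔
      (z.re + z.im) % 3 = 1 ∧ 0 < z.re + z.im ∧ z.im < 2 * z.re := by
  constructor
  · rintro ⟨q, rfl⟩
    simp only [ofCoreParams]
    omega
  · rintro ⟨hmod, hpos, hlt⟩
    refine ⟨(((z.re + z.im) / 3).toNat, ((2 * z.re - z.im) / 3).toNat), ?_⟩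
    ext <;> simp only [ofCoreParams] <;> omega

theorem ofCoreParams_mem_normFiber {q : ℕ × ℕ} {n : ℕ} :
    ofCoreParams q ∈ normFiber (3 * n + 1) ↔ q ∈ coreParams n := by
  rw [mem_normFiber, norm_eq, coreParams, Set.mem_ofPred]
  zify
  simp only [ofCoreParams]
  constructor <;> intro h <;> linarith

theorem finite_coreParams (n : ℕ) : (coreParams n).Finite :=
  ((finite_normFiber (3 * n + 1)).preimage ofCoreParams_injective.injOn).subset
    fun _ hq => ofCoreParams_mem_normFiber.2 hq

theorem mem_normFiber_one {u : EisensteinInt} : u ∈ normFiber 1 ↔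
    u = ⟨1, 0⟩ ∨ u = ⟨-1, 0⟩ ∨ u = ⟨0, 1⟩ ∨ u = ⟨0, -1⟩ ∨ u = ⟨1, 1⟩ ∨ u = ⟨-1, -1⟩ := by
  simp [normFiber_one]

theorem star_mul_self_of_mem_normFiber_one {u : EisensteinInt} (hu : u ∈ normFiber 1) :
    star u * u = 1 := by
  rw [mul_comm, ← algebraMap_norm_eq_mul_star, mem_normFiber.1 hu]
  simp

theorem mul_mem_normFiber {u z : EisensteinInt} {n : ℕ} (hu : u ∈ normFiber 1) :
    u * z ∈ normFiber n ↔ z ∈ normFiber n := by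
  rw [mem_normFiber, map_mul, mem_normFiber.1 hu, mem_normFiber, Nat.cast_one, one_mul]

-- The three linear forms `re + im`, `im - 2 * re`, `re - 2 * im` have sum zero, are congruent
-- modulo `3`, and are permuted cyclically by multiplication by `ω`.
theorem exists_mul_mem_range_ofCoreParams {z : EisensteinInt} (hz : ¬3 ∣ z.norm) :
    ∃ u ∈ normFiber 1, u * z ∈ Set.range ofCoreParams := by
  have hmod : ¬3 ∣ z.re + z.im := fun h => hz <| by
    rw [show z.norm = (z.re + z.im) * (z.re + z.im) - 3 * (z.re * z.im) by rw [norm_eq]; ring]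
    exact dvd_sub (h.mul_left _) (dvd_mul_right _ _)
  wlog hone : (z.re + z.im) % 3 = 1 generalizing z
  · obtain ⟨u, hu, huz⟩ := this (z := -z) (by rwa [QuadraticAlgebra.norm_neg])
      (by rw [re_neg, im_neg]; omega) (by rw [re_neg, im_neg]; omega)
    exact ⟨-u, by rwa [mem_normFiber, QuadraticAlgebra.norm_neg], by rwa [neg_mul_comm]⟩
  have hcases : (0 < z.re + z.im ∧ z.im < 2 * z.re) ∨
      (0 < z.re - 2 * z.im ∧ z.re + z.im < 0) ∨ (0 < z.im - 2 * z.re ∧ z.re < 2 * z.im) := by omega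
  rcases hcases with h | h | h
  · refine ⟨1, mem_normFiber_one.2 (.inl rfl), ?_⟩
    rw [one_mul, mem_range_ofCoreParams]
    omega
  · refine ⟨⟨0, 1⟩, mem_normFiber_one.2 (by simp), ?_⟩
    simp only [mem_range_ofCoreParams, re_mul, im_mul]
    omega
  · refine ⟨⟨-1, -1⟩, mem_normFiber_one.2 (by simp), ?_⟩
    simp only [mem_range_ofCoreParams, re_mul, im_mul]
    omega

theorem eq_one_of_mul_mem_range_ofCoreParams {u z : EisensteinInt} (hu : u ∈ normFiber 1)
    (hz : z ∈ Set.range ofCoreParams) (huz : u * z ∈ Set.range ofCoreParams) : u = 1 := by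
  rw [mem_range_ofCoreParams] at hz huz
  simp only [re_mul, im_mul] at huz
  rcases mem_normFiber_one.1 hu with rfl | rfl | rfl | rfl | rfl | rfl
  · rfl
  all_goals simp only at huz; omega

theorem injOn_mul_ofCoreParams (s : Set (ℕ × ℕ)) :
    Set.InjOn (fun x : EisensteinInt × (ℕ × ℕ) => x.1 * ofCoreParams x.2) (normFiber 1 ×ˢ s) := by
  rintro ⟨u, q⟩ ⟨hu, -⟩ ⟨v, r⟩ ⟨hv, -⟩ (h : u * ofCoreParams q = v * ofCoreParams r)
  have hq : star u * v * ofCoreParams r = ofCoreParams q := by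
    rw [mul_assoc, ← h, ← mul_assoc, star_mul_self_of_mem_normFiber_one hu, one_mul]
  have huv : star u * v = 1 := by
    refine eq_one_of_mul_mem_range_ofCoreParams ?_ ⟨r, rfl⟩ (hq ▸ ⟨q, rfl⟩)
    rwa [mul_mem_normFiber (by rwa [mem_normFiber, QuadraticAlgebra.norm_star])]
  have : v = u := by
    rw [← one_mul v, ← star_mul_self_of_mem_normFiber_one hu, mul_comm (star u), mul_assoc, huv,
      mul_one]
  rw [huv, one_mul] at hq
  rw [this, ofCoreParams_injective hq]

theorem image_mul_ofCoreParams (n : ℕ) :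
    (fun x : EisensteinInt × (ℕ × ℕ) => x.1 * ofCoreParams x.2) '' (normFiber 1 ×ˢ coreParams n) =
      normFiber (3 * n + 1) := by
  ext z
  constructor
  · rintro ⟨⟨u, q⟩, ⟨hu, hq⟩, rfl⟩
    exact (mul_mem_normFiber hu).2 (ofCoreParams_mem_normFiber.2 hq)
  · intro hz
    obtain ⟨u, hu, q, hq⟩ := exists_mul_mem_range_ofCoreParams (z := z)
      (by rw [mem_normFiber.1 hz]; omega)
    refine ⟨(star u, q), ⟨?_, ?_⟩, ?_⟩
    · rwa [mem_normFiber, QuadraticAlgebra.norm_star]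
    · exact ofCoreParams_mem_normFiber.1 (hq ▸ (mul_mem_normFiber hu).2 hz)
    · simp only [hq]
      rw [← mul_assoc, star_mul_self_of_mem_normFiber_one hu, one_mul]

theorem ncard_normFiber_three_mul_add_one (n : ℕ) :
    (normFiber (3 * n + 1)).ncard = 6 * (coreParams n).ncard := by
  rw [← image_mul_ofCoreParams, (injOn_mul_ofCoreParams _).ncard_image, Set.ncard_prod,
    ncard_normFiber_one]

theorem ncard_coreParams (n : ℕ) :
    ((coreParams n).ncard : ℤ) = ∑ d ∈ (3 * n + 1).divisors, χ₃ d := by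
  have h := ncard_normFiber (Nat.succ_ne_zero (3 * n))
  rw [Nat.succ_eq_add_one, ncard_normFiber_three_mul_add_one] at h
  push_cast at h
  linarith

end EisensteinInt

section BetaSet

/-- The hook length of the cell `(i, 0)` of `μ`, when `i` is the index of a nonempty row. -/
def firstColHook (μ : YoungDiagram) (i : ℕ) : ℕ := μ.rowLen i + (μ.colLen 0 - 1 - i)

/-- The beta-set of `μ`: the set of its first column hook lengths. It determines `μ`. -/
def betaSet (μ : YoungDiagram) : Finset ℕ := (range (μ.colLen 0)).image (firstColHook μ)

/-- The `j`-th element of the complement of the beta-set. Truncation is harmless, since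
`μ.colLen j ≤ μ.colLen 0`. -/
def betaGap (μ : YoungDiagram) (j : ℕ) : ℕ := μ.colLen 0 - μ.colLen j + j

variable (μ : YoungDiagram)

theorem lt_rowLen_iff_lt_colLen {i j : ℕ} : j < μ.rowLen i ↔ i < μ.colLen j := by
  rw [← YoungDiagram.mem_iff_lt_rowLen, YoungDiagram.mem_iff_lt_colLen]

theorem strictAntiOn_firstColHook : StrictAntiOn (firstColHook μ) (Set.Iio (μ.colLen 0)) := by
  intro i _ j (hj : j < μ.colLen 0) hij
  have := μ.rowLen_anti i j hij.le
  grind [firstColHook]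

theorem strictMono_betaGap : StrictMono (betaGap μ) := by
  intro i j hij
  have := μ.colLen_anti i j hij.le
  grind [betaGap]

theorem injOn_firstColHook : Set.InjOn (firstColHook μ) (range (μ.colLen 0)) := by
  simpa using (strictAntiOn_firstColHook μ).injOn

theorem mem_betaSet {x : ℕ} : x ∈ betaSet μ ↔ ∃ i < μ.colLen 0, firstColHook μ i = x := by
  simp [betaSet]

theorem card_betaSet : #(betaSet μ) = μ.colLen 0 := by
  rw [betaSet, card_image_of_injOn (injOn_firstColHook μ), card_range]

theorem zero_notMem_betaSet : 0 ∉ betaSet μ := by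
  rw [mem_betaSet]
  rintro ⟨i, hi, h⟩
  have := (lt_rowLen_iff_lt_colLen μ).2 hi
  grind [firstColHook]

theorem sum_rowLen : ∑ i ∈ range (μ.colLen 0), μ.rowLen i = μ.card := by
  rw [YoungDiagram.card, card_eq_sum_card_fiberwise (f := Prod.fst) (t := range (μ.colLen 0))]
  · exact sum_congr rfl fun i _ => μ.rowLen_eq_card
  · rintro ⟨i, j⟩ hij
    rw [mem_coe, YoungDiagram.mem_cells, YoungDiagram.mem_iff_lt_rowLen] at hij
    exact mem_range.2 ((lt_rowLen_iff_lt_colLen μ).1 (Nat.zero_lt_of_lt hij))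

theorem sum_betaSet : ∑ x ∈ betaSet μ, x = μ.card + ∑ i ∈ range (μ.colLen 0), i := by
  rw [betaSet, sum_image (injOn_firstColHook μ), ← sum_rowLen, ← sum_range_reflect (fun i => i),
    ← sum_add_distrib]
  rfl

theorem betaGap_lt_firstColHook_iff {i j : ℕ} (hi : i < μ.colLen 0) :
    betaGap μ j < firstColHook μ i ↔ j < μ.rowLen i := by
  have hanti := μ.colLen_anti 0 j j.zero_le
  have hcell := lt_rowLen_iff_lt_colLen μ (i := i) (j := j)
  unfold betaGap firstColHook
  omega

theorem hookLength_eq_sub {i j : ℕ} (hi : i < μ.colLen 0) :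
    μ.hookLength i j = firstColHook μ i - betaGap μ j := by
  have := μ.colLen_anti 0 j j.zero_le
  grind [YoungDiagram.hookLength, betaGap, firstColHook]

theorem betaGap_notMem_betaSet (j : ℕ) : betaGap μ j ∉ betaSet μ := by
  rw [mem_betaSet]
  rintro ⟨i, hi, h⟩
  have hanti := μ.colLen_anti 0 j j.zero_le
  have hcell := lt_rowLen_iff_lt_colLen μ (i := i) (j := j)
  unfold betaGap firstColHook at h
  omega

-- The `colLen 0` first column hooks and the first `rowLen 0` gaps are disjoint subsets of an
-- interval of length `colLen 0 + rowLen 0`, so they fill it.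
theorem betaSet_union_image_betaGap :
    betaSet μ ∪ (range (μ.rowLen 0)).image (betaGap μ) = range (μ.colLen 0 + μ.rowLen 0) := by
  apply eq_of_subset_of_card_le
  · refine union_subset ?_ ?_ <;> refine image_subset_iff.2 fun i hi => mem_range.2 ?_
    · have := μ.rowLen_anti 0 i i.zero_le
      grind [firstColHook]
    · grind [betaGap]
  · have hdisj : Disjoint (betaSet μ) ((range (μ.rowLen 0)).image (betaGap μ)) :=
      disjoint_right.2 (forall_mem_image.2 fun j _ => betaGap_notMem_betaSet μ j)
    rw [card_union_of_disjoint hdisj, card_betaSet,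
      card_image_of_injective _ (strictMono_betaGap μ).injective, card_range, card_range]

theorem range_betaGap : Set.range (betaGap μ) = (betaSet μ : Set ℕ)ᶜ := by
  ext y
  constructor
  · rintro ⟨j, rfl⟩
    exact betaGap_notMem_betaSet μ j
  · intro hy
    by_cases hlt : y < μ.colLen 0 + μ.rowLen 0
    · rw [← mem_range, ← betaSet_union_image_betaGap] at hlt
      obtain ⟨j, -, rfl⟩ := mem_image.1 ((mem_union.1 hlt).resolve_left hy)
      exact ⟨j, rfl⟩
    · refine ⟨y - μ.colLen 0, ?_⟩
      have := lt_rowLen_iff_lt_colLen μ (i := 0) (j := y - μ.colLen 0)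
      grind [betaGap]

theorem forall_not_dvd_hookLength_iff (t : ℕ) :
    (∀ c ∈ μ.cells, ¬t ∣ μ.hookLength c.1 c.2) ↔ ∀ x ∈ betaSet μ, t ≤ x → x - t ∈ betaSet μ := by
  constructor
  · intro h x hx htx
    by_contra hgap
    obtain ⟨i, hi, rfl⟩ := (mem_betaSet μ).1 hx
    obtain ⟨j, hj⟩ : firstColHook μ i - t ∈ Set.range (betaGap μ) := by rwa [range_betaGap]
    have ht : t ≠ 0 := by
      rintro rfl
      exact hgap hx
    have hij : j < μ.rowLen i := (betaGap_lt_firstColHook_iff μ hi).1 (by omega)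
    refine h (i, j) (YoungDiagram.mem_iff_lt_rowLen.2 hij) ?_
    rw [hookLength_eq_sub μ hi, hj, Nat.sub_sub_self htx]
  · rintro h ⟨i, j⟩ hc ⟨q, hq⟩
    have hij : j < μ.rowLen i := YoungDiagram.mem_iff_lt_rowLen.1 hc
    have hi : i < μ.colLen 0 := (lt_rowLen_iff_lt_colLen μ).1 (Nat.zero_lt_of_lt hij)
    have hlt := (betaGap_lt_firstColHook_iff μ hi).2 hij
    have hdescend (m : ℕ) (hm : t * m ≤ firstColHook μ i) :
        firstColHook μ i - t * m ∈ betaSet μ := by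
      induction m with
      | zero => exact (mem_betaSet μ).2 ⟨i, hi, rfl⟩
      | succ m ih =>
        rw [mul_add_one] at hm ⊢
        rw [← Nat.sub_sub]
        exact h _ (ih (by omega)) (by omega)
    rw [hookLength_eq_sub μ hi] at hq
    dsimp only at hq
    refine betaGap_notMem_betaSet μ j ?_
    rw [show betaGap μ j = firstColHook μ i - t * q by omega]
    exact hdescend q (by omega)

theorem betaSet_injective : Function.Injective betaSet := by
  intro μ ν h
  have hlen : μ.colLen 0 = ν.colLen 0 := by rw [← card_betaSet, ← card_betaSet, h]
  have hgap : betaGap μ = betaGap ν :=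
    ((strictMono_betaGap μ).range_inj (strictMono_betaGap ν)).1
      (by rw [range_betaGap, range_betaGap, h])
  ext ⟨i, j⟩
  have hj := congrFun hgap j
  have := μ.colLen_anti 0 j j.zero_le
  have := ν.colLen_anti 0 j j.zero_le
  rw [YoungDiagram.mem_cells, YoungDiagram.mem_cells, YoungDiagram.mem_iff_lt_colLen,
    YoungDiagram.mem_iff_lt_colLen]
  grind [betaGap]

theorem card_toFinset_ofPred_mem {X : Finset ℕ} (hfin : (Set.ofPred (· ∈ X)).Finite) :
    #hfin.toFinset = #X :=
  congrArg card (by ext; simp)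

theorem count_notMem_nth_add {X : Finset ℕ} {m : ℕ} (hm : m < #X) :
    Nat.count (· ∉ X) (Nat.nth (· ∈ X) m) + m = Nat.nth (· ∈ X) m := by
  have hcount : Nat.count (· ∈ X) (Nat.nth (· ∈ X) m) = m :=
    Nat.count_nth fun hfin => by rwa [card_toFinset_ofPred_mem]
  conv_lhs => enter [2]; rw [← hcount]
  rw [Nat.count_eq_card_filter_range, Nat.count_eq_card_filter_range, add_comm,
    card_filter_add_card_filter_not, card_range]

theorem image_nth_range_card (X : Finset ℕ) : (range #X).image (Nat.nth (· ∈ X)) = X := by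
  have hfin : (Set.ofPred (· ∈ X)).Finite := X.finite_toSet
  have himage := Nat.image_nth_Iio_card hfin
  rw [card_toFinset_ofPred_mem] at himage
  ext x
  simpa using Set.ext_iff.1 himage x

-- The row lengths of `μ` count the gaps below the elements of `X`, listed in decreasing order.
theorem exists_betaSet_eq {X : Finset ℕ} (hX : 0 ∉ X) : ∃ μ, betaSet μ = X := by
  let w := List.ofFn fun i : Fin #X => Nat.count (· ∉ X) (Nat.nth (· ∈ X) (#X - 1 - i))
  have hsorted : w.SortedGE := Antitone.sortedGE_ofFn fun i j (hij : (i : ℕ) ≤ j) =>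
    Nat.count_monotone _ <| Nat.nth_le_nth' (by omega) fun hfin => by
      rw [card_toFinset_ofPred_mem]
      omega
  have hpos : ∀ r ∈ w, 0 < r := List.forall_mem_ofFn_iff.2 fun i => by
    have hmem : Nat.nth (· ∈ X) (#X - 1 - i) ∈ (range #X).image (Nat.nth (· ∈ X)) :=
      mem_image_of_mem _ (mem_range.2 (by omega))
    rw [image_nth_range_card] at hmem
    refine Nat.pos_of_ne_zero fun hcount => Nat.count_iff_forall_not.1 hcount 0 ?_ hX
    exact Nat.pos_of_ne_zero (ne_of_mem_of_not_mem hmem hX)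
  have hlen : (YoungDiagram.ofRowLens w hsorted).colLen 0 = #X := by
    rw [← YoungDiagram.length_rowLens, YoungDiagram.rowLens_length_ofRowLens hpos, List.length_ofFn]
  have hhook : ∀ i ∈ range #X,
      firstColHook (.ofRowLens w hsorted) i = Nat.nth (· ∈ X) (#X - 1 - i) := by
    intro i hi
    rw [mem_range] at hi
    have hrow := YoungDiagram.rowLen_ofRowLens (hw := hsorted) ⟨i, by simpa [w] using hi⟩
    rw [firstColHook, hrow, hlen, ← count_notMem_nth_add (by omega)]
    simp [w]
  refine ⟨.ofRowLens w hsorted, ?_⟩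
  calc betaSet (.ofRowLens w hsorted)
      = (range #X).image (Nat.nth (· ∈ X) ∘ fun i => #X - 1 - i) := by
        rw [betaSet, hlen]
        exact image_congr hhook
    _ = X := by rw [← image_image, range_image_pred_top_sub, image_nth_range_card]

end BetaSet

section Abacus

/-- The bead positions of the abacus with three runners that carries `q.1` flush beads on
runner `1`, `q.2` on runner `2` and none on runner `0`. -/
def abacus (q : ℕ × ℕ) : Finset ℕ :=
  (range q.1).image (fun i => 3 * i + 1) ∪ (range q.2).image fun i => 3 * i + 2

theorem mem_abacus {q : ℕ × ℕ} {x : ℕ} :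
    x ∈ abacus q ↔ x % 3 = 1 ∧ x / 3 < q.1 ∨ x % 3 = 2 ∧ x / 3 < q.2 := by
  simp only [abacus, mem_union, mem_image, mem_range]
  constructor
  · rintro (⟨i, hi, rfl⟩ | ⟨i, hi, rfl⟩) <;> omega
  · rintro (⟨hmod, hlt⟩ | ⟨hmod, hlt⟩)
    · exact .inl ⟨x / 3, hlt, by omega⟩
    · exact .inr ⟨x / 3, hlt, by omega⟩

theorem sum_abacus {M : Type*} [AddCommMonoid M] (q : ℕ × ℕ) (f : ℕ → M) :
    ∑ x ∈ abacus q, f x = ∑ i ∈ range q.1, f (3 * i + 1) + ∑ i ∈ range q.2, f (3 * i + 2) := by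
  rw [abacus, sum_union, sum_image fun i _ j _ h => by omega, sum_image fun i _ j _ h => by omega]
  simp only [disjoint_left, mem_image]
  rintro _ ⟨i, -, rfl⟩ ⟨j, -, h⟩
  omega

theorem abacus_injective : Function.Injective abacus := by
  intro q r h
  simp only [Finset.ext_iff, mem_abacus] at h
  have h₁ := h (3 * q.1 + 1)
  have h₂ := h (3 * r.1 + 1)
  have h₃ := h (3 * q.2 + 2)
  have h₄ := h (3 * r.2 + 2)
  ext <;> omega

theorem exists_mul_add_mem_iff_lt {X : Finset ℕ} {t : ℕ} (ht : t ≠ 0)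
    (hX : ∀ x ∈ X, t ≤ x → x - t ∈ X) (c : ℕ) : ∃ a, ∀ i, t * i + c ∈ X ↔ i < a := by
  have hlower : IsLowerSet {i | t * i + c ∈ X} := by
    intro j i hij hj
    induction j, hij using Nat.le_induction with
    | base => exact hj
    | succ j _ ih =>
      refine ih ?_
      have := hX _ hj (by grind)
      rwa [show t * (j + 1) + c - t = t * j + c by grind] at this
  rcases hlower.eq_univ_or_Iio with huniv | ⟨a, ha⟩
  · refine absurd X.finite_toSet (Set.infinite_of_injective_forall_mem (f := fun i => t * i + c) ?_
      (Set.eq_univ_iff_forall.1 huniv))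
    exact (add_left_injective c).comp (mul_right_injective₀ ht)
  · exact ⟨a, Set.ext_iff.1 ha⟩

theorem mem_range_abacus {X : Finset ℕ} :
    X ∈ Set.range abacus ↔ 0 ∉ X ∧ ∀ x ∈ X, 3 ≤ x → x - 3 ∈ X := by
  constructor
  · rintro ⟨q, rfl⟩
    simp only [mem_abacus]
    exact ⟨by omega, fun x => by omega⟩
  · rintro ⟨hzero, hclosed⟩
    obtain ⟨z, hz⟩ := exists_mul_add_mem_iff_lt three_ne_zero hclosed 0
    obtain ⟨a, ha⟩ := exists_mul_add_mem_iff_lt three_ne_zero hclosed 1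
    obtain ⟨b, hb⟩ := exists_mul_add_mem_iff_lt three_ne_zero hclosed 2
    have hz_zero : z = 0 := by simpa [hzero] using hz 0
    refine ⟨(a, b), Finset.ext fun x => ?_⟩
    rw [mem_abacus]
    obtain ⟨i, rfl | rfl | rfl⟩ : ∃ i, x = 3 * i + 0 ∨ x = 3 * i + 1 ∨ x = 3 * i + 2 :=
      ⟨x / 3, by omega⟩
    · rw [hz]
      omega
    · rw [ha]
      omega
    · rw [hb]
      omega

theorem isThreeCore_iff_betaSet_mem_range_abacus {μ : YoungDiagram} :
    μ.IsThreeCore ↔ betaSet μ ∈ Set.range abacus := by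
  rw [mem_range_abacus, and_iff_right (zero_notMem_betaSet μ)]
  exact forall_not_dvd_hookLength_iff μ 3

theorem sum_range_mul_two_add (n : ℕ) : 2 * ∑ i ∈ range n, i + n = n ^ 2 := by
  induction n with
  | zero => rfl
  | succ n ih =>
    rw [sum_range_succ]
    linarith

theorem card_eq_iff_mem_coreParams {μ : YoungDiagram} {q : ℕ × ℕ} (h : betaSet μ = abacus q)
    {n : ℕ} : μ.card = n ↔ q ∈ coreParams n := by
  have hlen : μ.colLen 0 = q.1 + q.2 := by
    rw [← card_betaSet, h, card_eq_sum_ones, sum_abacus]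
    simp
  have hsum := sum_betaSet μ
  rw [h, sum_abacus, sum_add_distrib, sum_add_distrib, ← mul_sum, ← mul_sum, sum_const, sum_const,
    card_range, card_range, hlen] at hsum
  have h₁ := sum_range_mul_two_add q.1
  have h₂ := sum_range_mul_two_add q.2
  have h₁₂ := sum_range_mul_two_add (q.1 + q.2)
  have hcard : q.1 ^ 2 + q.2 ^ 2 + q.2 = μ.card + q.1 * q.2 := by
    simp only [smul_eq_mul] at hsum
    nlinarith
  rw [coreParams, Set.mem_ofPred]
  omega

theorem betaSet_image_threeCores (n : ℕ) :
    betaSet '' {μ | μ.card = n ∧ μ.IsThreeCore} = abacus '' coreParams n := by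
  ext X
  constructor
  · rintro ⟨μ, ⟨hcard, hcore⟩, rfl⟩
    obtain ⟨q, hq⟩ := isThreeCore_iff_betaSet_mem_range_abacus.1 hcore
    exact ⟨q, (card_eq_iff_mem_coreParams hq.symm).1 hcard, hq⟩
  · rintro ⟨q, hq, rfl⟩
    obtain ⟨μ, hμ⟩ := exists_betaSet_eq (mem_range_abacus.1 ⟨q, rfl⟩).1
    exact ⟨μ, ⟨(card_eq_iff_mem_coreParams hμ).2 hq,
      isThreeCore_iff_betaSet_mem_range_abacus.2 ⟨q, hμ.symm⟩⟩, hμ⟩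

theorem finite_threeCores (n : ℕ) : Finite {μ : YoungDiagram // μ.card = n ∧ μ.IsThreeCore} := by
  have hfin := (EisensteinInt.finite_coreParams n).image abacus
  rw [← betaSet_image_threeCores] at hfin
  exact hfin.of_finite_image betaSet_injective.injOn

theorem a3_eq_ncard_coreParams (n : ℕ) : a3 n = (coreParams n).ncard := by
  rw [← Set.ncard_image_of_injective _ abacus_injective, ← betaSet_image_threeCores,
    Set.ncard_image_of_injective _ betaSet_injective]
  rfl

theorem a3_eq_sum_divisors (n : ℕ) : (a3 n : ℤ) = ∑ d ∈ (3 * n + 1).divisors, χ₃ d := by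
  rw [a3_eq_ncard_coreParams, EisensteinInt.ncard_coreParams]

end Abacus

theorem card_pairs_eq_sum_antidiagonal {α β : Type*} {P : α → Prop} {Q : β → Prop} (v : α → ℕ)
    (w : β → ℕ) (hP : ∀ m, Finite {a // v a = m ∧ P a}) (hQ : ∀ m, Finite {b // w b = m ∧ Q b})
    (n : ℕ) :
    Nat.card {p : α × β // v p.1 + w p.2 = n ∧ P p.1 ∧ Q p.2} =
      ∑ ij ∈ antidiagonal n,
        Nat.card {a // v a = ij.1 ∧ P a} * Nat.card {b // w b = ij.2 ∧ Q b} := by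
  let e : {p : α × β // v p.1 + w p.2 = n ∧ P p.1 ∧ Q p.2} ≃
      Σ ij : antidiagonal n, {a // v a = ij.1.1 ∧ P a} × {b // w b = ij.1.2 ∧ Q b} :=
    { toFun p := ⟨⟨(v p.1.1, w p.1.2), mem_antidiagonal.2 p.2.1⟩,
        ⟨p.1.1, rfl, p.2.2.1⟩, ⟨p.1.2, rfl, p.2.2.2⟩⟩
      invFun s := ⟨(s.2.1.1, s.2.2.1), by
        rw [s.2.1.2.1, s.2.2.2.1, mem_antidiagonal.1 s.1.2]
        exact ⟨rfl, s.2.1.2.2, s.2.2.2.2⟩⟩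
      left_inv _ := rfl
      right_inv := by
        rintro ⟨⟨⟨i, j⟩, hij⟩, ⟨a, ha, hPa⟩, ⟨b, hb, hQb⟩⟩
        obtain rfl : v a = i := ha
        obtain rfl : w b = j := hb
        rfl }
  rw [Nat.card_congr e, Nat.card_sigma]
  simp only [Nat.card_prod]
  exact sum_coe_sort (antidiagonal n)
    fun ij => Nat.card {a // v a = ij.1 ∧ P a} * Nat.card {b // w b = ij.2 ∧ Q b}

theorem A3_eq_sum_antidiagonal (n : ℕ) :
    A3 n = ∑ ij ∈ antidiagonal n, a3 ij.1 * a3 ij.2 :=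
  card_pairs_eq_sum_antidiagonal YoungDiagram.card YoungDiagram.card finite_threeCores
    finite_threeCores n

section ProductPairs

/-- The decompositions `M = a * x + b * y` into two products of positive integers, encoded as
`((a, x), (b, y))`. -/
def productPairs (M : ℕ) : Finset ((ℕ × ℕ) × ℕ × ℕ) :=
  (antidiagonal M).biUnion fun ij => ij.1.divisorsAntidiagonal ×ˢ ij.2.divisorsAntidiagonal

theorem mem_productPairs {M : ℕ} {q : (ℕ × ℕ) × ℕ × ℕ} :
    q ∈ productPairs M ↔ q.1.1 * q.1.2 + q.2.1 * q.2.2 = M ∧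
      0 < q.1.1 ∧ 0 < q.1.2 ∧ 0 < q.2.1 ∧ 0 < q.2.2 := by
  simp only [productPairs, mem_biUnion, HasAntidiagonal.mem_antidiagonal, mem_product,
    Nat.mem_divisorsAntidiagonal, Prod.exists, Nat.pos_iff_ne_zero]
  constructor
  · rintro ⟨_, _, rfl, ⟨rfl, h₁⟩, rfl, h₂⟩
    exact ⟨rfl, left_ne_zero_of_mul h₁, right_ne_zero_of_mul h₁, left_ne_zero_of_mul h₂,
      right_ne_zero_of_mul h₂⟩
  · rintro ⟨rfl, ha, hx, hb, hy⟩
    exact ⟨_, _, rfl, ⟨rfl, mul_ne_zero ha hx⟩, rfl, mul_ne_zero hb hy⟩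

/-- The sum of a weight `F a x b y` over the decompositions `M = a * x + b * y` into two products
of positive integers. -/
def productPairSum {R : Type*} [AddCommMonoid R] (M : ℕ) (F : ℕ → ℕ → ℕ → ℕ → R) : R :=
  ∑ q ∈ productPairs M, F q.1.1 q.1.2 q.2.1 q.2.2

section AddCommMonoid

variable {R : Type*} [AddCommMonoid R] (M : ℕ) (F : ℕ → ℕ → ℕ → ℕ → R)

theorem productPairSum_add (F G : ℕ → ℕ → ℕ → ℕ → R) :
    productPairSum M (fun a x b y => F a x b y + G a x b y) =
      productPairSum M F + productPairSum M G :=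
  sum_add_distrib

theorem productPairSum_swap :
    productPairSum M (fun a x b y => F b y a x) = productPairSum M F := by
  refine sum_nbij' Prod.swap Prod.swap ?_ ?_ (fun _ _ => rfl) (fun _ _ => rfl) (fun _ _ => rfl) <;>
  · intro q hq
    rw [mem_productPairs] at hq ⊢
    grind

theorem productPairSum_transpose_left :
    productPairSum M (fun a x b y => F x a b y) = productPairSum M F := by
  refine sum_nbij' (fun q => (q.1.swap, q.2)) (fun q => (q.1.swap, q.2)) ?_ ?_
    (fun _ _ => rfl) (fun _ _ => rfl) (fun _ _ => rfl) <;>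
  · intro q hq
    rw [mem_productPairs] at hq ⊢
    grind

theorem productPairSum_transpose :
    productPairSum M (fun a x b y => F x a y b) = productPairSum M F := by
  rw [productPairSum_transpose_left M fun a x b y => F a x y b,
    ← productPairSum_swap, productPairSum_transpose_left M fun a x b y => F b y a x,
    productPairSum_swap]

theorem productPairSum_trichotomy (u v : ℕ → ℕ → ℕ → ℕ → ℕ) :
    productPairSum M F = productPairSum M (fun a x b y =>
        if u a x b y < v a x b y then F a x b y else 0) +
      productPairSum M (fun a x b y => if v a x b y < u a x b y then F a x b y else 0) +
      productPairSum M (fun a x b y => if u a x b y = v a x b y then F a x b y else 0) := by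
  rw [← productPairSum_add, ← productPairSum_add]
  refine sum_congr rfl fun ⟨⟨a, x⟩, b, y⟩ _ => ?_
  rcases lt_trichotomy (u a x b y) (v a x b y) with h | h | h
  · simp [h, h.not_gt, h.ne]
  · simp [h]
  · simp [h, h.not_gt, h.ne']

-- `a * x + b * y = (a - b) * x + b * (x + y)`
theorem productPairSum_shift :
    productPairSum M (fun a x b y => if b < a then F (a - b) x b (x + y) else 0) =
      productPairSum M (fun a x b y => if x < y then F a x b y else 0) := by
  simp only [productPairSum, ← sum_filter]
  refine sum_nbij' (fun q => ((q.1.1 - q.2.1, q.1.2), (q.2.1, q.1.2 + q.2.2)))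
    (fun q => ((q.1.1 + q.2.1, q.1.2), (q.2.1, q.2.2 - q.1.2))) ?_ ?_ ?_ ?_ ?_
  · rintro ⟨⟨a, x⟩, b, y⟩ hq
    simp only [mem_filter, mem_productPairs] at hq ⊢
    obtain ⟨⟨rfl, ha, hx, hb, hy⟩, hlt⟩ := hq
    obtain ⟨c, rfl⟩ := Nat.exists_eq_add_of_lt hlt
    rw [show b + c + 1 - b = c + 1 by omega]
    exact ⟨⟨by ring, by omega, hx, hb, by omega⟩, by omega⟩
  · rintro ⟨⟨a, x⟩, b, y⟩ hq
    simp only [mem_filter, mem_productPairs] at hq ⊢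
    obtain ⟨⟨rfl, ha, hx, hb, hy⟩, hlt⟩ := hq
    obtain ⟨c, rfl⟩ := Nat.exists_eq_add_of_lt hlt
    rw [show x + c + 1 - x = c + 1 by omega]
    exact ⟨⟨by ring, by omega, hx, hb, by omega⟩, by omega⟩
  all_goals grind

theorem productPairSum_eq_sum_antidiagonal :
    productPairSum M F = ∑ ij ∈ antidiagonal M, ∑ ax ∈ ij.1.divisorsAntidiagonal,
      ∑ bY ∈ ij.2.divisorsAntidiagonal, F ax.1 ax.2 bY.1 bY.2 := by
  rw [productPairSum, productPairs, sum_biUnion]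
  · simp only [sum_product]
  · rintro ⟨i, j⟩ _ ⟨k, l⟩ _ hne
    refine disjoint_left.2 fun q hq hq' => hne ?_
    simp only [mem_product, Nat.mem_divisorsAntidiagonal] at hq hq'
    ext <;> grind

theorem productPairSum_diag (F : ℕ → ℕ → ℕ → R) :
    productPairSum M (fun a x b y => if a = b then F a x y else 0) =
      ∑ d ∈ M.divisorsAntidiagonal, ∑ x ∈ Ioo 0 d.2, F d.1 x (d.2 - x) := by
  rw [productPairSum, ← sum_filter, sum_sigma']
  refine sum_nbij' (fun q => ⟨(q.1.1, q.1.2 + q.2.2), q.1.2⟩)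
    (fun s => ((s.1.1, s.2), (s.1.1, s.1.2 - s.2))) ?_ ?_ ?_ ?_ ?_
  · rintro ⟨⟨a, x⟩, b, y⟩ hq
    simp only [mem_filter, mem_productPairs, mem_sigma, Nat.mem_divisorsAntidiagonal,
      mem_Ioo] at hq ⊢
    obtain ⟨⟨rfl, ha, hx, hb, hy⟩, rfl⟩ := hq
    exact ⟨⟨by ring, by positivity⟩, hx, by omega⟩
  · rintro ⟨⟨a, t⟩, x⟩ hs
    simp only [mem_filter, mem_productPairs, mem_sigma, Nat.mem_divisorsAntidiagonal,
      mem_Ioo] at hs ⊢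
    obtain ⟨⟨rfl, hne⟩, hx, hlt⟩ := hs
    have ha : 0 < a := Nat.pos_of_ne_zero (left_ne_zero_of_mul hne)
    exact ⟨⟨by rw [← mul_add, Nat.add_sub_cancel' hlt.le], ha, hx, ha, by omega⟩, trivial⟩
  all_goals grind

end AddCommMonoid

theorem productPairSum_sub {R : Type*} [AddCommGroup R] (M : ℕ) (F G : ℕ → ℕ → ℕ → ℕ → R) :
    productPairSum M (fun a x b y => F a x b y - G a x b y) =
      productPairSum M F - productPairSum M G :=
  sum_sub_distrib _ _

end ProductPairs

section Convolution

/-- The weight on decompositions `a * x + b * y` whose sum is the convolution of the divisor sums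
of `χ₃` over integers congruent to `1` modulo `3`. -/
def charWeight (a x b y : ZMod 3) : ℤ := χ₃ a * χ₃ b * if a * x = 1 ∧ b * y = 1 then 1 else 0

/-- The auxiliary weight of Liouville's method. It is invariant under the substitution behind
`a * x + b * y = a * (x - y) + (a + b) * y`, while the one behind
`a * x + b * y = (a - b) * x + b * (x + y)` exhibits `charWeight` as a difference of two copies. -/
def liouvilleWeight (a x b y : ZMod 3) : ℤ := if a = 0 ∧ x ≠ 0 ∧ b = x ∧ y = -x then 1 else 0

theorem charWeight_swap (a x b y : ZMod 3) : charWeight b y a x = charWeight a x b y := by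
  decide +revert

theorem charWeight_eq_liouvilleWeight_sub (a x b y : ZMod 3) :
    charWeight a x b y =
      liouvilleWeight (a - b) x b (x + y) - liouvilleWeight (x + y) b (a - b) x := by
  decide +revert

theorem liouvilleWeight_shift (a x b y : ZMod 3) :
    liouvilleWeight a (x - y) y (a + b) = liouvilleWeight a x b y := by
  decide +revert

theorem liouvilleWeight_self_right (a b y : ZMod 3) : liouvilleWeight a y b y = 0 := by
  decide +revert

theorem liouvilleWeight_self_left (x b y : ZMod 3) : liouvilleWeight y x b y = 0 := by
  decide +revert

theorem productPairSum_liouvilleWeight_lt_right (M : ℕ) :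
    productPairSum M (fun a x b y => if y < x then liouvilleWeight a x b y else 0) =
      productPairSum M (fun a x b y => if a < y then liouvilleWeight a x b y else 0) := by
  calc productPairSum M (fun a x b y => if y < x then liouvilleWeight a x b y else 0)
    _ = productPairSum M (fun a x b y => if b < a then liouvilleWeight x a y b else 0) :=
        (productPairSum_transpose M _).symm
    _ = productPairSum M (fun a x b y =>
          if b < a then liouvilleWeight x (a - b : ℕ) b (x + y : ℕ) else 0) := by
        refine sum_congr rfl fun q _ => if_ctx_congr Iff.rfl (fun h => ?_) fun _ => rfl
        rw [Nat.cast_sub h.le, Nat.cast_add, liouvilleWeight_shift]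
    _ = productPairSum M (fun a x b y => if x < y then liouvilleWeight x a b y else 0) :=
        productPairSum_shift M fun a x b y => liouvilleWeight x a b y
    _ = _ := productPairSum_transpose_left M fun a x b y =>
        if a < y then liouvilleWeight a x b y else 0

theorem productPairSum_liouvilleWeight_lt_left (M : ℕ) :
    productPairSum M (fun a x b y => if x < y then liouvilleWeight a x b y else 0) =
      productPairSum M (fun a x b y => if y < a then liouvilleWeight a x b y else 0) := by
  have hdiag_right : productPairSum M
      (fun a x b y => if x = y then liouvilleWeight a x b y else 0) = 0 :=
    sum_eq_zero fun q _ => ite_eq_right_iff.2 fun h => by rw [h, liouvilleWeight_self_right]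
  have hdiag_left : productPairSum M
      (fun a x b y => if a = y then liouvilleWeight a x b y else 0) = 0 :=
    sum_eq_zero fun q _ => ite_eq_right_iff.2 fun h => by rw [h, liouvilleWeight_self_left]
  have hright := productPairSum_trichotomy M (fun a x b y => liouvilleWeight a x b y)
    (fun _ x _ _ => x) (fun _ _ _ y => y)
  have hleft := productPairSum_trichotomy M (fun a x b y => liouvilleWeight a x b y)
    (fun a _ _ _ => a) (fun _ _ _ y => y)
  linarith [productPairSum_liouvilleWeight_lt_right M]

theorem productPairSum_charWeight_lt (M : ℕ) :
    productPairSum M (fun a x b y => if b < a then charWeight a x b y else 0) = 0 := by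
  calc productPairSum M (fun a x b y => if b < a then charWeight a x b y else 0)
    _ = productPairSum M (fun a x b y => if b < a then
          liouvilleWeight (a - b : ℕ) x b (x + y : ℕ) -
            liouvilleWeight (x + y : ℕ) b (a - b : ℕ) x else 0) := by
        refine sum_congr rfl fun q _ => if_ctx_congr Iff.rfl (fun h => ?_) fun _ => rfl
        rw [Nat.cast_sub h.le, Nat.cast_add, charWeight_eq_liouvilleWeight_sub]
    _ = productPairSum M (fun a x b y =>
          if x < y then liouvilleWeight a x b y - liouvilleWeight y b a x else 0) :=
        productPairSum_shift M fun a x b y => liouvilleWeight a x b y - liouvilleWeight y b a x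
    _ = productPairSum M (fun a x b y => if x < y then liouvilleWeight a x b y else 0) -
          productPairSum M (fun a x b y => if x < y then liouvilleWeight y b a x else 0) := by
        rw [← productPairSum_sub]
        exact sum_congr rfl fun q _ => by dsimp only; split_ifs <;> simp
    _ = productPairSum M (fun a x b y => if x < y then liouvilleWeight a x b y else 0) -
          productPairSum M (fun a x b y => if y < a then liouvilleWeight a x b y else 0) := by
        rw [← productPairSum_swap M fun a x b y => if x < y then liouvilleWeight y b a x else 0,
          productPairSum_transpose_left M fun a x b y =>
            if y < a then liouvilleWeight a x b y else 0]
    _ = 0 := sub_eq_zero.2 (productPairSum_liouvilleWeight_lt_left M)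

theorem productPairSum_charWeight (M : ℕ) :
    productPairSum M (fun a x b y => charWeight a x b y) =
      ∑ d ∈ M.divisorsAntidiagonal, ∑ x ∈ Ioo 0 d.2, charWeight d.1 x d.1 (d.2 - x : ℕ) := by
  have hgt : productPairSum M (fun a x b y => if a < b then charWeight a x b y else 0) = 0 := by
    rw [← productPairSum_swap]
    simpa only [charWeight_swap] using productPairSum_charWeight_lt M
  rw [productPairSum_trichotomy M _ (fun a _ _ _ => a) (fun _ _ b _ => b), hgt,
    productPairSum_charWeight_lt, zero_add, zero_add,
    ← productPairSum_diag M fun a x y => charWeight a x a y]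
  exact sum_congr rfl fun q _ => if_ctx_congr Iff.rfl (fun h => by rw [h]) fun _ => rfl

theorem three_mul_sum_charWeight_diag {a t : ℕ} (h : a * t % 3 = 2) :
    3 * ∑ x ∈ Ioo 0 t, charWeight a x a (t - x : ℕ) = t - χ₃ t := by
  have hcast : (a : ZMod 3) * t = 2 := by
    rw [← Nat.cast_mul, ← ZMod.natCast_mod, h]
    rfl
  have hweight : ∀ x ∈ Ioo 0 t,
      charWeight a x a (t - x : ℕ) = if x ≡ a [MOD 3] then 1 else 0 := by
    intro x hx
    rw [Nat.cast_sub (mem_Ioo.1 hx).2.le]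
    simp only [← ZMod.natCast_eq_natCast_iff]
    generalize (a : ZMod 3) = a, (t : ZMod 3) = t, (x : ZMod 3) = x at *
    decide +revert
  have hmod : a % 3 = 1 ∧ t % 3 = 2 ∨ a % 3 = 2 ∧ t % 3 = 1 := by
    have := Nat.mod_lt a three_pos
    have := Nat.mod_lt t three_pos
    rw [Nat.mul_mod] at h
    interval_cases a % 3 <;> interval_cases t % 3 <;> simp_all
  have hcard : (Ioo 0 t).filter (· ≡ a [MOD 3]) = (range t).filter (· ≡ a [MOD 3]) := by
    ext x
    simp only [mem_filter, mem_Ioo, mem_range]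
    rw [Nat.ModEq]
    omega
  rw [sum_congr rfl hweight, sum_boole, hcard, ← Nat.count_eq_card_filter_range,
    Nat.count_modEq_card _ three_pos]
  rcases hmod with ⟨ha, ht⟩ | ⟨ha, ht⟩
  · rw [χ₃_natCast_eq_neg_one ht, if_pos (by omega)]
    omega
  · rw [χ₃_natCast_eq_one ht, if_neg (by omega)]
    omega

theorem sum_divisors_χ₃_eq_zero {M : ℕ} (hM : M % 3 = 2) : ∑ d ∈ M.divisors, χ₃ d = 0 := by
  have hneg : ∀ d ∈ M.divisors, χ₃ (M / d : ℕ) = -χ₃ d := by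
    intro d hd
    have hmul : ((M / d : ℕ) : ZMod 3) * d = 2 := by
      rw [← Nat.cast_mul, Nat.div_mul_cancel (Nat.dvd_of_mem_divisors hd), ← ZMod.natCast_mod, hM]
      rfl
    generalize ((M / d : ℕ) : ZMod 3) = e, (d : ZMod 3) = d at *
    decide +revert
  have hsum := Nat.sum_div_divisors M fun d => χ₃ d
  rw [sum_congr rfl hneg, sum_neg_distrib] at hsum
  linarith

theorem three_mul_productPairSum_charWeight {M : ℕ} (hM : M % 3 = 2) :
    3 * productPairSum M (fun a x b y => charWeight a x b y) = (∑ d ∈ M.divisors, d : ℕ) := by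
  have hdiag : ∀ d ∈ M.divisorsAntidiagonal,
      3 * ∑ x ∈ Ioo 0 d.2, charWeight d.1 x d.1 (d.2 - x : ℕ) = d.2 - χ₃ d.2 := fun d hd =>
    three_mul_sum_charWeight_diag (by rw [(Nat.mem_divisorsAntidiagonal.1 hd).1, hM])
  rw [productPairSum_charWeight, mul_sum, sum_congr rfl hdiag,
    Nat.sum_divisorsAntidiagonal' fun _ d => (d : ℤ) - χ₃ d, sum_sub_distrib,
    sum_divisors_χ₃_eq_zero hM, sub_zero, Nat.cast_sum]

theorem sum_divisorsAntidiagonal_charWeight (i j : ℕ) :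
    ∑ ax ∈ i.divisorsAntidiagonal, ∑ bY ∈ j.divisorsAntidiagonal,
        charWeight ax.1 ax.2 bY.1 bY.2 =
      if i % 3 = 1 ∧ j % 3 = 1 then (∑ d ∈ i.divisors, χ₃ d) * ∑ d ∈ j.divisors, χ₃ d else 0 := by
  have hcast : ∀ m : ℕ, (m : ZMod 3) = 1 ↔ m % 3 = 1 := fun m => by
    rw [← Nat.cast_one, ZMod.natCast_eq_natCast_iff']
  have hweight : ∀ ax ∈ i.divisorsAntidiagonal, ∀ bY ∈ j.divisorsAntidiagonal,
      charWeight ax.1 ax.2 bY.1 bY.2 =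
        χ₃ ax.1 * χ₃ bY.1 * if i % 3 = 1 ∧ j % 3 = 1 then 1 else 0 := by
    intro ax hax bY hbY
    rw [charWeight, ← Nat.cast_mul, ← Nat.cast_mul, (Nat.mem_divisorsAntidiagonal.1 hax).1,
      (Nat.mem_divisorsAntidiagonal.1 hbY).1]
    simp only [hcast]
  rw [sum_congr rfl fun ax hax => sum_congr rfl (hweight ax hax)]
  simp only [← sum_mul, ← sum_mul_sum, Nat.sum_divisorsAntidiagonal fun d _ => χ₃ d]
  rw [mul_ite, mul_one, mul_zero]

theorem sum_antidiagonal_mul_eq_productPairSum (n : ℕ) :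
    ∑ ij ∈ antidiagonal n,
        (∑ d ∈ (3 * ij.1 + 1).divisors, χ₃ d) * ∑ d ∈ (3 * ij.2 + 1).divisors, χ₃ d =
      productPairSum (3 * n + 2) (fun a x b y => charWeight a x b y) := by
  rw [productPairSum_eq_sum_antidiagonal]
  simp only [sum_divisorsAntidiagonal_charWeight]
  rw [← sum_filter]
  refine sum_nbij' (fun ij => (3 * ij.1 + 1, 3 * ij.2 + 1)) (fun ij => (ij.1 / 3, ij.2 / 3))
    ?_ ?_ ?_ ?_ ?_
  all_goals
    intro ij hij
    simp only [mem_filter, HasAntidiagonal.mem_antidiagonal, Prod.ext_iff] at hij ⊢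
  all_goals omega

end Convolution

theorem three_mul_A3 (n : ℕ) : 3 * (A3 n : ℤ) = (∑ d ∈ (3 * n + 2).divisors, d : ℕ) := by
  rw [← three_mul_productPairSum_charWeight (by omega), ← sum_antidiagonal_mul_eq_productPairSum,
    A3_eq_sum_antidiagonal]
  push_cast
  simp only [a3_eq_sum_divisors]

theorem three_mul_pow_mul_add {p : ℕ} (hp : ¬3 ∣ p) (k n : ℕ) :
    3 * (p ^ (2 * k) * n + (2 * p ^ (2 * k) - 2) / 3) + 2 = p ^ (2 * k) * (3 * n + 2) := by
  have hsq : p ^ 2 % 3 = 1 := by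
    rcases (by omega : p % 3 = 1 ∨ p % 3 = 2) with h | h <;> rw [Nat.pow_mod, h]
  have hmod : p ^ (2 * k) % 3 = 1 := by
    rw [pow_mul, Nat.pow_mod, hsq, one_pow, Nat.one_mod]
  rw [show p ^ (2 * k) * (3 * n + 2) = 3 * (p ^ (2 * k) * n) + 2 * p ^ (2 * k) by ring]
  omega

theorem A3_rec_two_mod_three_general (p k n : ℕ) (hp : p.Prime) (hp3 : p ≠ 3) :
    ((p : ℤ) ^ 2 - 1) * A3 (p ^ (2 * k) * n + (2 * p ^ (2 * k) - 2) / 3) +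
      ((p : ℤ) ^ (2 * k) - (p : ℤ) ^ 2) * A3 n =
    ((p : ℤ) ^ (2 * k) - 1) * A3 (p ^ 2 * n + (2 * p ^ 2 - 2) / 3) := by
  have hdvd : ¬3 ∣ p := fun h => hp3 ((Nat.prime_dvd_prime_iff_eq Nat.prime_three hp).1 h).symm
  obtain ⟨a, m, hpm, hm⟩ :=
    Nat.exists_eq_pow_mul_and_not_dvd (n := 3 * n + 2) (by omega) p hp.ne_one
  have hA3 (j : ℕ) : ((p : ℤ) - 1) *
      (3 * (A3 (p ^ (2 * j) * n + (2 * p ^ (2 * j) - 2) / 3) : ℤ)) =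
        ((p : ℤ) ^ (2 * j + a + 1) - 1) * (∑ d ∈ m.divisors, d : ℕ) := by
    rw [three_mul_A3, three_mul_pow_mul_add hdvd, hm, ← mul_assoc, ← pow_add,
      sub_one_mul_sum_divisors_prime_pow_mul hp hpm]
  have hA3_zero := hA3 0
  have hA3_one := hA3 1
  have hcancel : ((p : ℤ) - 1) * 3 ≠ 0 :=
    mul_ne_zero (sub_ne_zero.2 (by exact_mod_cast hp.ne_one)) three_ne_zero
  simp only [mul_zero, pow_zero, one_mul, mul_one, Nat.sub_self, Nat.zero_div, add_zero]
    at hA3_zero hA3_one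
  refine mul_left_cancel₀ hcancel ?_
  linear_combination ((p : ℤ) ^ 2 - 1) * hA3 k + ((p : ℤ) ^ (2 * k) - (p : ℤ) ^ 2) * hA3_zero -
    ((p : ℤ) ^ (2 * k) - 1) * hA3_one

/-- For a prime p ≡ 2 (mod 3) and k, n ≥ 0:
(p²−1)·A₃(p²ᵏn + (2p²ᵏ−2)/3) + (p²ᵏ−p²)·A₃(n) = (p²ᵏ−1)·A₃(p²n + (2p²−2)/3). -/
theorem A3_rec_two_mod_three (p k n : ℕ) (hp : p.Prime) (hp3 : p % 3 = 2) :
    ((p : ℤ) ^ 2 - 1) * A3 (p ^ (2 * k) * n + (2 * p ^ (2 * k) - 2) / 3) +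
      ((p : ℤ) ^ (2 * k) - (p : ℤ) ^ 2) * A3 n =
    ((p : ℤ) ^ (2 * k) - 1) * A3 (p ^ 2 * n + (2 * p ^ 2 - 2) / 3) := by
  exact A3_rec_two_mod_three_general p k n hp (by rintro rfl; simp at hp3)
end
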